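/- arXiv:math/0308145 — 2 statements merged into one kernel-verified Lean document; each statement's English description precedes it below -/
import Mathlib

section
/- Let E be a Banach space with cotype 2. Then for every Banach space F, a continuous bilinear map T : E × E → F is 1-semi-integral if and only if it is 1-dominated. -/
open MeasureTheory

/-- Weak `ℓ_q` norm of a finite family in a normed space. -/
noncomputable def weakLpNorm (𝕜 : Type*) [RCLike 𝕜] {E : Type*} [NormedAddCommGroup E]
    [NormedSpace 𝕜 E] (q : ℝ) {m : ℕ} (x : Fin m → E) : ℝ :=
  ⨆ φ : {φ : E →L[𝕜] 𝕜 // ‖φ‖ ≤ 1}, (∑ j, ‖φ.1 (x j)‖ ^ q) ^ (1 / q)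

/-- `T` satisfies the `p`-semi-integral inequality with constant `C`, witnessed by a regular
Borel probability measure on the product of the closed dual unit balls with their
weak-star topologies. -/
def SemiIntegralWith (𝕜 : Type*) [RCLike 𝕜] {ι : Type*} [Fintype ι] {E : ι → Type*}
    [∀ i, NormedAddCommGroup (E i)] [∀ i, NormedSpace 𝕜 (E i)]
    {F : Type*} [NormedAddCommGroup F]
    (p C : ℝ) (T : (∀ i, E i) → F) : Prop :=
  letI : MeasurableSpace (∀ i, {φ : WeakDual 𝕜 (E i) // ∀ z, ‖φ z‖ ≤ ‖z‖}) := borel _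
  ∃ μ : Measure (∀ i, {φ : WeakDual 𝕜 (E i) // ∀ z, ‖φ z‖ ≤ ‖z‖}),
    IsProbabilityMeasure μ ∧ μ.Regular ∧
      ∀ x : ∀ i, E i,
        ‖T x‖ ≤ C * (∫ φ, ∏ i, ‖(φ i).1 (x i)‖ ^ p ∂μ) ^ (1 / p)

/-- The `si,p` norm: infimum of admissible constants. -/
noncomputable def siNorm (𝕜 : Type*) [RCLike 𝕜] {ι : Type*} [Fintype ι] {E : ι → Type*}
    [∀ i, NormedAddCommGroup (E i)] [∀ i, NormedSpace 𝕜 (E i)]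
    {F : Type*} [NormedAddCommGroup F]
    (p : ℝ) (T : (∀ i, E i) → F) : ℝ :=
  sInf {C : ℝ | 0 ≤ C ∧ SemiIntegralWith 𝕜 p C T}

/-- `T` is absolutely `(p; q₁,…,qₙ)`-summing with constant `C`. -/
def AbsSummingWith (𝕜 : Type*) [RCLike 𝕜] {ι : Type*} [Fintype ι] {E : ι → Type*}
    [∀ i, NormedAddCommGroup (E i)] [∀ i, NormedSpace 𝕜 (E i)]
    {F : Type*} [NormedAddCommGroup F]
    (p : ℝ) (q : ι → ℝ) (C : ℝ) (T : (∀ i, E i) → F) : Prop :=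
  ∀ (m : ℕ) (x : ∀ i, Fin m → E i),
    (∑ j, ‖T (fun i => x i j)‖ ^ p) ^ (1 / p) ≤ C * ∏ i, weakLpNorm 𝕜 (q i) (x i)

/-- `T` is `p`-dominated with constant `C`, witnessed by regular Borel probability measures
on the closed dual unit balls with their weak-star topologies. -/
def DominatedWith (𝕜 : Type*) [RCLike 𝕜] {ι : Type*} [Fintype ι] {E : ι → Type*}
    [∀ i, NormedAddCommGroup (E i)] [∀ i, NormedSpace 𝕜 (E i)]
    {F : Type*} [NormedAddCommGroup F]
    (p C : ℝ) (T : (∀ i, E i) → F) : Prop :=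
  letI : ∀ i, MeasurableSpace {φ : WeakDual 𝕜 (E i) // ∀ z, ‖φ z‖ ≤ ‖z‖} := fun i => borel _
  ∃ μ : ∀ i, Measure {φ : WeakDual 𝕜 (E i) // ∀ z, ‖φ z‖ ≤ ‖z‖},
    (∀ i, IsProbabilityMeasure (μ i)) ∧ (∀ i, (μ i).Regular) ∧
      ∀ x : ∀ i, E i,
        ‖T x‖ ≤ C * ∏ i, (∫ φ, ‖φ.1 (x i)‖ ^ p ∂(μ i)) ^ (1 / p)

/-- `E` is an `𝓛_∞`-space. -/
def IsLinftySpace (𝕜 : Type*) [RCLike 𝕜] (E : Type*) [NormedAddCommGroup E]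
    [NormedSpace 𝕜 E] : Prop :=
  ∃ lam : ℝ, 1 ≤ lam ∧ ∀ M : Submodule 𝕜 E, FiniteDimensional 𝕜 M →
    ∃ N : Submodule 𝕜 E, M ≤ N ∧ FiniteDimensional 𝕜 N ∧
      ∃ v : N ≃L[𝕜] (Fin (Module.finrank 𝕜 N) → 𝕜),
        ‖(v : N →L[𝕜] (Fin (Module.finrank 𝕜 N) → 𝕜))‖ *
          ‖(v.symm : (Fin (Module.finrank 𝕜 N) → 𝕜) →L[𝕜] N)‖ ≤ lam

/-- `F` has cotype `q`. -/
def HasCotype (q : ℝ) (F : Type*) [NormedAddCommGroup F] : Prop :=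
  ∃ C : ℝ, 0 ≤ C ∧ ∀ (m : ℕ) (x : Fin m → F),
    (∑ j, ‖x j‖ ^ q) ^ (1 / q) ≤
      C * ((∑ ε : Fin m → Bool, ‖∑ j, (if ε j then x j else -x j)‖ ^ (2 : ℝ)) / 2 ^ m)
        ^ ((1 : ℝ) / 2)

/-!
Cauchy–Schwarz turns the `1`-semi-integral inequality into domination of `T` by a product of
`L²` norms, and on a space of cotype 2 an `L²` norm is dominated by an `L¹` norm, because
(Maurey) 2-summing maps on such a space are 1-summing.

For the latter, a weakly summable family `x 1, …, x n` is the image of the unit vectors under an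
operator `u : ℓ_∞^n → E` of bounded norm. If `u` is 2-summing with a constant independent of `n`,
Pietsch domination gives weights `l` with `∑ l i = 1` and `x i = √(l i) y i`, where `y` is weakly
2-summable, and Cauchy–Schwarz bounds `∑ N (x i) = ∑ √(l i) N (y i)`.

The uniform constant comes from a bootstrap. If `u` is 2-summing with constant `κ`, truncating the
argument of `u` at level `√s` gives `‖u a‖² ≤ 2 ‖u‖² s + 2 (κ / s) ∑ l i ‖a i‖⁴`. Averaging this
over Rademacher sums, whose fourth moments are controlled by their second moments, cotype 2 with a
suitable `s` improves `κ` to `24 C⁴ ‖u‖² + κ / 2`. Iterating from a crude bound that depends on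
`n` leaves `48 C⁴ ‖u‖²`.

Conversely, a product of dominating measures witnesses semi-integrality, for any number of spaces.
-/

open scoped BigOperators CompactlySupported

section Riesz

variable {K : Type*} [TopologicalSpace K] [CompactSpace K] [T2Space K]
  [MeasurableSpace K] [BorelSpace K]

theorem exists_isProbabilityMeasure_regular_integral_eq (Λ : C(K, ℝ) →ₗ[ℝ] ℝ)
    (hΛ : ∀ f, 0 ≤ f → 0 ≤ Λ f) (hΛ_one : Λ 1 = 1) :
    ∃ μ : Measure K, IsProbabilityMeasure μ ∧ μ.Regular ∧ ∀ f : C(K, ℝ), ∫ k, f k ∂μ = Λ f := by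
  let Λc : C_c(K, ℝ) →ₗ[ℝ] ℝ :=
    { toFun := fun f => Λ f.toContinuousMap
      map_add' := fun f g => Λ.map_add f.toContinuousMap g.toContinuousMap
      map_smul' := fun c f => Λ.map_smul c f.toContinuousMap }
  let Λp : C_c(K, ℝ) →ₚ[ℝ] ℝ := PositiveLinearMap.mk₀ Λc fun f hf => hΛ f.toContinuousMap hf
  have integral_eq (f : C(K, ℝ)) : ∫ k, f k ∂(RealRMK.rieszMeasure Λp) = Λ f :=
    RealRMK.integral_rieszMeasure Λp (CompactlySupportedContinuousMap.continuousMapEquiv f)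
  have real_univ : (RealRMK.rieszMeasure Λp).real Set.univ = 1 := by
    simpa [hΛ_one] using integral_eq 1
  exact ⟨RealRMK.rieszMeasure Λp, ⟨(ENNReal.toReal_eq_one_iff _).1 real_univ⟩, inferInstance,
    integral_eq⟩

/- Extend `c • 1 ↦ c` to a functional that is nonnegative on both `S` and the nonnegative
functions; the hypothesis on `S` says exactly that this map is nonnegative on the constants in
the cone they generate. -/
theorem exists_isProbabilityMeasure_regular_forall_mem_integral_nonneg
    (S : PointedCone ℝ C(K, ℝ)) (hS : ∀ f ∈ S, ∃ k, 0 ≤ f k) :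
    ∃ μ : Measure K, IsProbabilityMeasure μ ∧ μ.Regular ∧ ∀ f ∈ S, 0 ≤ ∫ k, f k ∂μ := by
  obtain ⟨k₀, -⟩ := hS 0 S.zero_mem
  have one_ne_zero : (1 : C(K, ℝ)) ≠ 0 := fun h => by simpa using DFunLike.congr_fun h k₀
  let const : C(K, ℝ) →ₗ.[ℝ] ℝ := LinearPMap.mkSpanSingleton 1 1 one_ne_zero
  have const_smul (c : ℝ) (hc) : const ⟨c • 1, hc⟩ = c :=
    (LinearPMap.mkSpanSingleton'_apply 1 (1 : ℝ) _ c hc).trans (mul_one c)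
  have const_nonneg (f : const.domain) (hf : (f : C(K, ℝ)) ∈ S ⊔ PointedCone.positive ℝ _) :
      0 ≤ const f := by
    obtain ⟨f, hf_dom⟩ := f
    obtain ⟨c, rfl⟩ := Submodule.mem_span_singleton.1 hf_dom
    obtain ⟨g, hg, h, hh, hgh⟩ := Submodule.mem_sup.1 hf
    obtain ⟨k, hk⟩ := hS g hg
    have hk_eq : g k + h k = c := by simpa using DFunLike.congr_fun hgh k
    rw [const_smul, ← hk_eq]
    exact add_nonneg hk (hh k)
  have cofinal (f : C(K, ℝ)) :
      ∃ c : const.domain, (c : C(K, ℝ)) + f ∈ S ⊔ PointedCone.positive ℝ _ := by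
    refine ⟨⟨‖f‖ • 1, Submodule.smul_mem _ _ (Submodule.mem_span_singleton_self 1)⟩,
      Submodule.mem_sup_right fun k => ?_⟩
    simpa [add_comm, neg_le_iff_add_nonneg] using neg_le_of_abs_le (f.norm_coe_le_norm k)
  obtain ⟨Λ, hΛ_const, hΛ⟩ := riesz_extension _ const const_nonneg cofinal
  have hΛ_one : Λ 1 = 1 := (hΛ_const ⟨1, Submodule.mem_span_singleton_self 1⟩).trans
    (LinearPMap.mkSpanSingleton'_apply_self 1 1 _ _)
  obtain ⟨μ, hμ_prob, hμ_reg, hμ⟩ := exists_isProbabilityMeasure_regular_integral_eq Λ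
    (fun f hf => hΛ f (Submodule.mem_sup_right hf)) hΛ_one
  exact ⟨μ, hμ_prob, hμ_reg, fun f hf => hμ f ▸ hΛ f (Submodule.mem_sup_left hf)⟩

end Riesz

section Pietsch

variable {α K : Type*}

/-- `N` is abstractly summing relative to `R` with constant `A`: whenever the functions
`R (a j) : K → ℝ` have their sum bounded by `B`, the values `N (a j)` have their sum bounded by
`A * B`. A linear map `u` is `p`-summing when this holds for `N x = ‖u x‖ ^ p` and
`R x φ = ‖φ x‖ ^ p`, with `φ` in the dual ball; the constant is then the `p`-th power of the
usual one. -/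
def SummingWith (N : α → ℝ) (R : α → K → ℝ) (A : ℝ) : Prop :=
  ∀ (m : ℕ) (a : Fin m → α) (B : ℝ), (∀ k, ∑ j, R (a j) k ≤ B) → ∑ j, N (a j) ≤ A * B

namespace SummingWith

variable {N : α → ℝ} {A : ℝ}

theorem exists_isProbabilityMeasure_regular_le_integral [TopologicalSpace K] [CompactSpace K]
    [T2Space K] [Nonempty K] [MeasurableSpace K] [BorelSpace K] {R : α → C(K, ℝ)}
    (h : SummingWith N (fun a => R a) A)
    (hscale : ∀ t : ℝ, 0 ≤ t → ∀ a, ∃ b, N b = t * N a ∧ ∀ k, R b k = t * R a k) :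
    ∃ μ : Measure K, IsProbabilityMeasure μ ∧ μ.Regular ∧ ∀ a, N a ≤ A * ∫ k, R a k ∂μ := by
  let g (a : α) : C(K, ℝ) := A • R a - N a • 1
  have hull_nonneg : ∀ f ∈ PointedCone.hull ℝ (Set.range g), ∃ k, 0 ≤ f k := by
    intro f hf
    obtain ⟨m, w, f, rfl⟩ := Submodule.mem_span_set'.1 hf
    choose a ha using fun j => (f j).2
    choose b hNb hRb using fun j => hscale (w j) (w j).2 (a j)
    obtain ⟨k, -, hk⟩ := isCompact_univ.exists_isMaxOn Set.univ_nonempty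
      (f := fun k => ∑ j, R (b j) k) (by fun_prop)
    have sum_le : ∑ j, N (b j) ≤ A * ∑ j, R (b j) k := h m b _ fun k' => hk (Set.mem_univ k')
    have sum_eq : (∑ j, w j • (f j : C(K, ℝ))) k = A * ∑ j, R (b j) k - ∑ j, N (b j) := by
      rw [Finset.mul_sum, ← Finset.sum_sub_distrib, ContinuousMap.sum_apply]
      refine Finset.sum_congr rfl fun j _ => ?_
      rw [← ha, hNb, hRb]
      change (w j : ℝ) * (A * R (a j) k - N (a j) * 1) = _
      ring
    exact ⟨k, sum_eq ▸ sub_nonneg.2 sum_le⟩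
  obtain ⟨μ, hμ_prob, hμ_reg, hμ⟩ :=
    exists_isProbabilityMeasure_regular_forall_mem_integral_nonneg _ hull_nonneg
  refine ⟨μ, hμ_prob, hμ_reg, fun a => ?_⟩
  have hR : Integrable (R a) μ :=
    (R a).continuous.integrable_of_hasCompactSupport (.of_compactSpace _)
  have : 0 ≤ ∫ k, A * R a k - N a ∂μ := by
    simpa [g] using hμ (g a) (PointedCone.subset_hull ⟨a, rfl⟩)
  rw [integral_sub (hR.const_mul A) (integrable_const _), integral_const_mul] at this
  simpa using this

theorem exists_mem_stdSimplex [Fintype K] [Nonempty K] {R : α → K → ℝ} (h : SummingWith N R A)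
    (hscale : ∀ t : ℝ, 0 ≤ t → ∀ a, ∃ b, N b = t * N a ∧ ∀ k, R b k = t * R a k) :
    ∃ l ∈ stdSimplex ℝ K, ∀ a, N a ≤ A * ∑ k, l k * R a k := by
  let : TopologicalSpace K := ⊥
  have : DiscreteTopology K := ⟨rfl⟩
  let : MeasurableSpace K := ⊤
  have : BorelSpace K := ⟨borel_eq_top_of_discrete.symm⟩
  obtain ⟨μ, _, -, hμ⟩ := exists_isProbabilityMeasure_regular_le_integral
    (R := fun a => ⟨R a, continuous_of_discreteTopology⟩) h hscale
  refine ⟨fun k => μ.real {k}, ⟨fun k => measureReal_nonneg, ?_⟩, fun a => ?_⟩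
  · rw [sum_measureReal_singleton, Finset.coe_univ, probReal_univ]
  · simpa [integral_fintype .of_finite] using hμ a

end SummingWith

end Pietsch

section Rademacher

/-- The signed sum `∑ ±x j`, with sign `+` where `ε j` is `true`. Averaging over all
`ε : ι → Bool` integrates over the Rademacher functions. -/
def rademacherSum {ι E : Type*} [Fintype ι] [AddCommGroup E] (ε : ι → Bool) (x : ι → E) : E :=
  ∑ j, if ε j then x j else -x j

theorem map_rademacherSum {ι E F G : Type*} [Fintype ι] [AddCommGroup E] [AddCommGroup F]
    [FunLike G E F] [AddMonoidHomClass G E F] (u : G) (ε : ι → Bool) (x : ι → E) :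
    u (rademacherSum ε x) = rademacherSum ε fun j => u (x j) := by
  simp only [rademacherSum, map_sum, apply_ite u, map_neg]

theorem rademacherSum_apply {ι κ : Type*} {E : κ → Type*} [Fintype ι] [∀ k, AddCommGroup (E k)]
    (ε : ι → Bool) (x : ι → ∀ k, E k) (k : κ) :
    rademacherSum ε x k = rademacherSum ε fun j => x j k :=
  map_rademacherSum (Pi.evalAddMonoidHom E k) ε x

theorem expect_rademacherSum_succ {E : Type*} [AddCommGroup E] {m : ℕ} (G : E → ℝ)
    (x : Fin (m + 1) → E) :
    𝔼 ε, G (rademacherSum ε x) =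
      𝔼 ε, (G (rademacherSum ε (Fin.tail x) + x 0) +
        G (rademacherSum ε (Fin.tail x) - x 0)) / 2 := by
  simp only [Fintype.expect_eq_sum_div_card]
  rw [← (Fin.consEquiv fun _ => Bool).sum_comp, Fintype.sum_prod_type, Fintype.sum_bool,
    ← Finset.sum_add_distrib, ← Finset.sum_div]
  simp only [rademacherSum, Fin.consEquiv, Equiv.coe_fn_mk, Fin.sum_univ_succ, Fin.cons_zero,
    Fin.cons_succ, Fin.tail, if_true, Bool.false_eq_true, if_false, add_comm, sub_eq_add_neg,
    Fintype.card_fun, Fintype.card_bool, Fintype.card_fin]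
  push_cast
  ring

variable {H : Type*} [NormedAddCommGroup H] [InnerProductSpace ℝ H]

theorem expect_norm_rademacherSum_sq {m : ℕ} (x : Fin m → H) :
    𝔼 ε, ‖rademacherSum ε x‖ ^ 2 = ∑ j, ‖x j‖ ^ 2 := by
  induction m with
  | zero => simp [rademacherSum]
  | succ m ih =>
    have parallelogram (s b : H) : (‖s + b‖ ^ 2 + ‖s - b‖ ^ 2) / 2 = ‖s‖ ^ 2 + ‖b‖ ^ 2 := by
      linarith [parallelogram_law_with_norm ℝ s b]
    rw [expect_rademacherSum_succ (‖·‖ ^ 2)]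
    simp only [parallelogram, Finset.expect_add_distrib, ih, Fintype.expect_const]
    rw [Fin.sum_univ_succ, add_comm]
    rfl

theorem norm_add_pow_four_add_norm_sub_pow_four_le (s b : H) :
    ‖s + b‖ ^ 4 + ‖s - b‖ ^ 4 ≤ 2 * (‖s‖ ^ 4 + 6 * ‖b‖ ^ 2 * ‖s‖ ^ 2 + ‖b‖ ^ 4) := by
  have cauchy_schwarz : inner ℝ s b ^ 2 ≤ ‖s‖ ^ 2 * ‖b‖ ^ 2 := by
    rw [← mul_pow]
    exact sq_le_sq' (neg_le_of_abs_le (abs_real_inner_le_norm s b)) (real_inner_le_norm s b)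
  calc ‖s + b‖ ^ 4 + ‖s - b‖ ^ 4 = (‖s + b‖ ^ 2) ^ 2 + (‖s - b‖ ^ 2) ^ 2 := by ring
    _ = 2 * ((‖s‖ ^ 2 + ‖b‖ ^ 2) ^ 2 + 4 * inner ℝ s b ^ 2) := by
      rw [norm_add_sq_real, norm_sub_sq_real]
      ring
    _ ≤ 2 * ((‖s‖ ^ 2 + ‖b‖ ^ 2) ^ 2 + 4 * (‖s‖ ^ 2 * ‖b‖ ^ 2)) := by gcongr
    _ = _ := by ring

theorem expect_norm_rademacherSum_pow_four_le {m : ℕ} (x : Fin m → H) :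
    𝔼 ε, ‖rademacherSum ε x‖ ^ 4 ≤ 3 * (∑ j, ‖x j‖ ^ 2) ^ 2 := by
  induction m with
  | zero => simp [rademacherSum]
  | succ m ih =>
    set A := ∑ j, ‖Fin.tail x j‖ ^ 2
    set b := ‖x 0‖
    calc 𝔼 ε, ‖rademacherSum ε x‖ ^ 4
        = 𝔼 ε, (‖rademacherSum ε (Fin.tail x) + x 0‖ ^ 4 +
            ‖rademacherSum ε (Fin.tail x) - x 0‖ ^ 4) / 2 :=
          expect_rademacherSum_succ (‖·‖ ^ 4) x
      _ ≤ 𝔼 ε, (‖rademacherSum ε (Fin.tail x)‖ ^ 4 +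
            6 * b ^ 2 * ‖rademacherSum ε (Fin.tail x)‖ ^ 2 + b ^ 4) :=
          Finset.expect_le_expect fun ε _ => by
            linarith [norm_add_pow_four_add_norm_sub_pow_four_le (rademacherSum ε (Fin.tail x))
              (x 0)]
      _ = 𝔼 ε, ‖rademacherSum ε (Fin.tail x)‖ ^ 4 + 6 * b ^ 2 * A + b ^ 4 := by
          rw [Finset.expect_add_distrib, Finset.expect_add_distrib, ← Finset.mul_expect,
            expect_norm_rademacherSum_sq, Fintype.expect_const]
      _ ≤ 3 * A ^ 2 + 6 * b ^ 2 * A + 3 * b ^ 4 := by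
          have : 0 ≤ b ^ 4 := by positivity
          linarith [ih (Fin.tail x)]
      _ = 3 * (∑ j, ‖x j‖ ^ 2) ^ 2 := by
          rw [Fin.sum_univ_succ]
          change _ = 3 * (b ^ 2 + A) ^ 2
          ring

theorem expect_sum_mul_norm_rademacherSum_pow_four_le {ι : Type*} [Fintype ι] {l : ι → ℝ}
    (hl : l ∈ stdSimplex ℝ ι) {m : ℕ} {f : Fin m → ι → H} {S : ℝ}
    (hf : ∀ i, ∑ j, ‖f j i‖ ^ 2 ≤ S) :
    𝔼 ε, ∑ i, l i * ‖rademacherSum ε f i‖ ^ 4 ≤ 3 * S ^ 2 := by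
  calc 𝔼 ε, ∑ i, l i * ‖rademacherSum ε f i‖ ^ 4
      = ∑ i, l i * 𝔼 ε, ‖rademacherSum ε fun j => f j i‖ ^ 4 := by
        simp only [Finset.expect_sum_comm, Finset.mul_expect, rademacherSum_apply]
    _ ≤ ∑ i, l i * (3 * S ^ 2) := by
        gcongr with i
        · exact hl.1 i
        · exact (expect_norm_rademacherSum_pow_four_le _).trans (by gcongr; exact hf i)
    _ = 3 * S ^ 2 := by rw [← Finset.sum_mul, hl.2, one_mul]

end Rademacher

section Cotype

/-- Cotype 2 with constant `C`, in squared form, and with the integral over the Rademacher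
functions written as an average over signs. -/
def CotypeTwoWith (C : ℝ) (E : Type*) [NormedAddCommGroup E] : Prop :=
  ∀ (m : ℕ) (x : Fin m → E), ∑ j, ‖x j‖ ^ 2 ≤ C ^ 2 * 𝔼 ε, ‖rademacherSum ε x‖ ^ 2

theorem HasCotype.exists_cotypeTwoWith {E : Type*} [NormedAddCommGroup E] (hE : HasCotype 2 E) :
    ∃ C > 0, CotypeTwoWith C E := by
  obtain ⟨C, hC, h⟩ := hE
  refine ⟨C + 1, by positivity, fun m x => ?_⟩
  have sqrt_le : √(∑ j, ‖x j‖ ^ 2) ≤ C * √(𝔼 ε, ‖rademacherSum ε x‖ ^ 2) := by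
    simpa [Real.sqrt_eq_rpow, Fintype.expect_eq_sum_div_card, rademacherSum] using h m x
  have expect_nonneg : 0 ≤ 𝔼 ε, ‖rademacherSum ε x‖ ^ 2 :=
    Finset.expect_nonneg fun _ _ => by positivity
  calc ∑ j, ‖x j‖ ^ 2 = √(∑ j, ‖x j‖ ^ 2) ^ 2 := (Real.sq_sqrt (by positivity)).symm
    _ ≤ (C * √(𝔼 ε, ‖rademacherSum ε x‖ ^ 2)) ^ 2 := by gcongr
    _ = C ^ 2 * 𝔼 ε, ‖rademacherSum ε x‖ ^ 2 := by rw [mul_pow, Real.sq_sqrt expect_nonneg]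
    _ ≤ (C + 1) ^ 2 * 𝔼 ε, ‖rademacherSum ε x‖ ^ 2 := by gcongr; linarith

variable {𝕜 ι E : Type*} [RCLike 𝕜] [Fintype ι] [NormedAddCommGroup E] [NormedSpace 𝕜 E]
  {u : (ι → 𝕜) →L[𝕜] E} {C κ : ℝ}

theorem norm_sq_le_of_norm_sq_le_sum_norm_sq {l : ι → ℝ} (hl : ∀ i, 0 ≤ l i) (hκ : 0 ≤ κ)
    (hu : ∀ a, ‖u a‖ ^ 2 ≤ κ * ∑ i, l i * ‖a i‖ ^ 2) {s : ℝ} (hs : 0 < s) (a : ι → 𝕜) :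
    ‖u a‖ ^ 2 ≤ 2 * (‖u‖ ^ 2 * s) + 2 * (κ / s * ∑ i, l i * ‖a i‖ ^ 4) := by
  classical
  let small : ι → 𝕜 := fun i => if ‖a i‖ ^ 2 ≤ s then a i else 0
  let large : ι → 𝕜 := fun i => if ‖a i‖ ^ 2 ≤ s then 0 else a i
  have split : a = small + large := by
    ext i
    by_cases h : ‖a i‖ ^ 2 ≤ s <;> simp [small, large, h]
  have norm_small_le : ‖small‖ ≤ √s := by
    refine (pi_norm_le_iff_of_nonneg (Real.sqrt_nonneg s)).2 fun i => ?_
    by_cases h : ‖a i‖ ^ 2 ≤ s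
    · simpa [small, h] using Real.le_sqrt_of_sq_le h
    · simp [small, h]
  have small_le : ‖u small‖ ^ 2 ≤ ‖u‖ ^ 2 * s := by
    calc ‖u small‖ ^ 2 ≤ (‖u‖ * √s) ^ 2 := by
          gcongr
          exact u.le_opNorm_of_le norm_small_le
      _ = ‖u‖ ^ 2 * s := by rw [mul_pow, Real.sq_sqrt hs.le]
  have norm_large_sq_le (i : ι) : ‖large i‖ ^ 2 ≤ ‖a i‖ ^ 4 / s := by
    by_cases h : ‖a i‖ ^ 2 ≤ s
    · rw [show large i = 0 from if_pos h, norm_zero, zero_pow two_ne_zero]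
      positivity
    · simp only [large, if_neg h]
      rw [le_div_iff₀ hs]
      nlinarith [sq_nonneg ‖a i‖]
  have large_le : ‖u large‖ ^ 2 ≤ κ / s * ∑ i, l i * ‖a i‖ ^ 4 := by
    calc ‖u large‖ ^ 2 ≤ κ * ∑ i, l i * ‖large i‖ ^ 2 := hu large
      _ ≤ κ * ∑ i, l i * (‖a i‖ ^ 4 / s) := by
          gcongr with i
          exacts [hl i, norm_large_sq_le i]
      _ = κ / s * ∑ i, l i * ‖a i‖ ^ 4 := by
          simp only [← mul_div_assoc, ← Finset.sum_div]
          ring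
  calc ‖u a‖ ^ 2 ≤ (‖u small‖ + ‖u large‖) ^ 2 := by
        rw [split, map_add]
        gcongr
        exact norm_add_le _ _
    _ ≤ 2 * (‖u small‖ ^ 2 + ‖u large‖ ^ 2) := add_sq_le
    _ ≤ 2 * (‖u‖ ^ 2 * s) + 2 * (κ / s * ∑ i, l i * ‖a i‖ ^ 4) := by linarith

variable (u) in
theorem summingWith_norm_sq_apply_card :
    SummingWith (fun a => ‖u a‖ ^ 2) (fun a i => ‖a i‖ ^ 2) (‖u‖ ^ 2 * Fintype.card ι) := by
  intro m f S hS
  have norm_sq_le (a : ι → 𝕜) : ‖a‖ ^ 2 ≤ ∑ i, ‖a i‖ ^ 2 := by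
    rw [← Real.le_sqrt (norm_nonneg a) (by positivity)]
    refine (pi_norm_le_iff_of_nonneg (Real.sqrt_nonneg _)).2 fun i => ?_
    exact Real.le_sqrt_of_sq_le <| Finset.single_le_sum (f := fun i => ‖a i‖ ^ 2)
      (fun _ _ => by positivity) (Finset.mem_univ i)
  calc ∑ j, ‖u (f j)‖ ^ 2 ≤ ∑ j, ‖u‖ ^ 2 * ∑ i, ‖f j i‖ ^ 2 := by
        gcongr with j
        calc ‖u (f j)‖ ^ 2 ≤ (‖u‖ * ‖f j‖) ^ 2 := by
              gcongr
              exact u.le_opNorm (f j)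
          _ = ‖u‖ ^ 2 * ‖f j‖ ^ 2 := mul_pow _ _ 2
          _ ≤ ‖u‖ ^ 2 * ∑ i, ‖f j i‖ ^ 2 := by
              gcongr
              exact norm_sq_le (f j)
    _ = ‖u‖ ^ 2 * ∑ i, ∑ j, ‖f j i‖ ^ 2 := by rw [← Finset.mul_sum, Finset.sum_comm]
    _ ≤ ‖u‖ ^ 2 * ∑ _i : ι, S := by
        gcongr with i
        exact hS i
    _ = ‖u‖ ^ 2 * Fintype.card ι * S := by
        rw [Finset.sum_const, Finset.card_univ, nsmul_eq_mul, mul_assoc]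

theorem SummingWith.exists_stdSimplex_norm_sq_le [Nonempty ι]
    (hu : SummingWith (fun a => ‖u a‖ ^ 2) (fun a i => ‖a i‖ ^ 2) κ) :
    ∃ l ∈ stdSimplex ℝ ι, ∀ a, ‖u a‖ ^ 2 ≤ κ * ∑ i, l i * ‖a i‖ ^ 2 :=
  hu.exists_mem_stdSimplex fun t ht a => by
    have norm_sqrt_sq : ‖((√t : ℝ) : 𝕜)‖ ^ 2 = t := by
      rw [RCLike.norm_ofReal, sq_abs, Real.sq_sqrt ht]
    refine ⟨((√t : ℝ) : 𝕜) • a, ?_, fun i => ?_⟩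
    · rw [map_smul, norm_smul, mul_pow, norm_sqrt_sq]
    · rw [Pi.smul_apply, norm_smul, mul_pow, norm_sqrt_sq]

theorem CotypeTwoWith.summingWith_norm_sq_apply_improve [Nonempty ι] (hE : CotypeTwoWith C E)
    (hC : 0 < C)
    (hu : SummingWith (fun a => ‖u a‖ ^ 2) (fun a i => ‖a i‖ ^ 2) κ) :
    SummingWith (fun a => ‖u a‖ ^ 2) (fun a i => ‖a i‖ ^ 2) (24 * C ^ 4 * ‖u‖ ^ 2 + κ / 2) := by
  have hκ : 0 ≤ κ := (sq_nonneg ‖u 1‖).trans <| by simpa using hu 1 (fun _ => 1) 1 (by simp)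
  obtain ⟨l, hl, hu⟩ := hu.exists_stdSimplex_norm_sq_le
  intro m f S hS
  have S_nonneg : 0 ≤ S :=
    (Finset.sum_nonneg fun _ _ => by positivity).trans (hS (Classical.arbitrary ι))
  obtain rfl | hS_pos := S_nonneg.eq_or_lt
  · have f_eq_zero (j : Fin m) : f j = 0 := by
      ext i
      have := (Finset.sum_eq_zero_iff_of_nonneg fun j _ => sq_nonneg ‖f j i‖).1
        ((hS i).antisymm (by positivity)) j (Finset.mem_univ j)
      simpa using this
    simp [f_eq_zero]
  set s := 12 * C ^ 2 * S with hs
  have hs_pos : 0 < s := by positivity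
  calc ∑ j, ‖u (f j)‖ ^ 2 ≤ C ^ 2 * 𝔼 ε, ‖u (rademacherSum ε f)‖ ^ 2 := by
        simpa only [map_rademacherSum] using hE m fun j => u (f j)
    _ ≤ C ^ 2 * 𝔼 ε, (2 * (‖u‖ ^ 2 * s) +
          2 * (κ / s * ∑ i, l i * ‖rademacherSum ε f i‖ ^ 4)) := by
        gcongr
        exact norm_sq_le_of_norm_sq_le_sum_norm_sq hl.1 hκ hu hs_pos _
    _ = C ^ 2 * (2 * (‖u‖ ^ 2 * s) +
          2 * (κ / s * 𝔼 ε, ∑ i, l i * ‖rademacherSum ε f i‖ ^ 4)) := by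
        rw [Finset.expect_add_distrib, Fintype.expect_const, ← Finset.mul_expect,
          ← Finset.mul_expect]
    _ ≤ C ^ 2 * (2 * (‖u‖ ^ 2 * s) + 2 * (κ / s * (3 * S ^ 2))) := by
        gcongr
        exact expect_sum_mul_norm_rademacherSum_pow_four_le hl hS
    _ = (24 * C ^ 4 * ‖u‖ ^ 2 + κ / 2) * S := by
        rw [hs]
        field_simp
        ring

/- `48 * C ^ 4 * ‖u‖ ^ 2` is the fixed point of `κ ↦ 24 * C ^ 4 * ‖u‖ ^ 2 + κ / 2`. -/
theorem CotypeTwoWith.summingWith_norm_sq_apply [Nonempty ι] (hE : CotypeTwoWith C E)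
    (hC : 0 < C) (u : (ι → 𝕜) →L[𝕜] E) :
    SummingWith (fun a => ‖u a‖ ^ 2) (fun a i => ‖a i‖ ^ 2) (48 * C ^ 4 * ‖u‖ ^ 2) := by
  set κ := 48 * C ^ 4 * ‖u‖ ^ 2 with hκ
  set d := ‖u‖ ^ 2 * Fintype.card ι - κ with hd
  have iterate (k : ℕ) :
      SummingWith (fun a => ‖u a‖ ^ 2) (fun a i => ‖a i‖ ^ 2) (κ + d * (1 / 2) ^ k) := by
    induction k with
    | zero => simpa [hd] using summingWith_norm_sq_apply_card u
    | succ k ih =>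
      convert hE.summingWith_norm_sq_apply_improve hC ih using 1
      rw [hκ]
      ring
  intro m f S hS
  have tendsto : Filter.Tendsto (fun k : ℕ => (κ + d * (1 / 2) ^ k) * S) Filter.atTop
      (nhds ((κ + d * 0) * S)) :=
    (((tendsto_pow_atTop_nhds_zero_of_lt_one (by norm_num) (by norm_num)).const_mul d).const_add
      κ).mul_const S
  simpa using ge_of_tendsto' tendsto fun k => iterate k m f S hS

end Cotype

/-- The closed unit ball of the dual of `E` with the weak-star topology, spelled as in
`SemiIntegralWith` and `DominatedWith`. -/
abbrev DualBall (𝕜 E : Type*) [RCLike 𝕜] [NormedAddCommGroup E] [NormedSpace 𝕜 E] : Type _ :=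
  {φ : WeakDual 𝕜 E // ∀ z, ‖φ z‖ ≤ ‖z‖}

namespace DualBall

variable (𝕜 : Type*) {E : Type*} [RCLike 𝕜] [NormedAddCommGroup E] [NormedSpace 𝕜 E]

instance : CompactSpace (DualBall 𝕜 E) := by
  refine isCompact_iff_compactSpace (s := {φ : WeakDual 𝕜 E | ∀ z, ‖φ z‖ ≤ ‖z‖}).1 ?_
  convert WeakDual.isCompact_closedBall (𝕜 := 𝕜) (E := E) 0 1 using 1
  ext φ
  rw [Set.mem_preimage, mem_closedBall_zero_iff, ContinuousLinearMap.opNorm_le_iff zero_le_one]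
  simp only [one_mul]
  rfl

instance : Nonempty (DualBall 𝕜 E) :=
  ⟨0, fun z => norm_zero.trans_le (norm_nonneg z)⟩

/-- The weak-star continuous function `φ ↦ ‖φ x‖`. -/
noncomputable def normEval (x : E) : C(DualBall 𝕜 E, ℝ) where
  toFun φ := ‖φ.1 x‖
  continuous_toFun := ((WeakDual.eval_continuous x).comp continuous_subtype_val).norm

end DualBall

section DualBall

variable {𝕜 ι E : Type*} [RCLike 𝕜] [Fintype ι] [NormedAddCommGroup E] [NormedSpace 𝕜 E]

theorem norm_sum_smul_le_of_forall_dualBall {x : ι → E} {B : ℝ}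
    (hx : ∀ φ : DualBall 𝕜 E, ∑ i, ‖φ.1 (x i)‖ ≤ B) (a : ι → 𝕜) :
    ‖∑ i, a i • x i‖ ≤ B * ‖a‖ := by
  obtain ⟨g, norm_g_le, g_apply⟩ := exists_dual_vector'' 𝕜 (∑ i, a i • x i)
  have sum_le : ∑ i, ‖g (x i)‖ ≤ B :=
    hx ⟨g.toWeakDual, fun z => by simpa using g.le_of_opNorm_le norm_g_le z⟩
  calc ‖∑ i, a i • x i‖ = ‖g (∑ i, a i • x i)‖ := by
        rw [g_apply, RCLike.norm_ofReal, abs_norm]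
    _ = ‖∑ i, a i • g (x i)‖ := by simp only [map_sum, map_smul]
    _ ≤ ∑ i, ‖a i • g (x i)‖ := norm_sum_le _ _
    _ ≤ ∑ i, ‖a‖ * ‖g (x i)‖ := by
        gcongr with i
        rw [norm_smul]
        gcongr
        exact norm_le_pi_norm a i
    _ = ‖a‖ * ∑ i, ‖g (x i)‖ := by rw [Finset.mul_sum]
    _ ≤ B * ‖a‖ := by
        rw [mul_comm]
        gcongr

theorem sum_norm_dualBall_apply_sq_le {y : ι → E} {D : ℝ} (hD : 0 ≤ D)
    (hy : ∀ b : ι → 𝕜, ‖∑ i, b i • y i‖ ^ 2 ≤ D * ∑ i, ‖b i‖ ^ 2) (φ : DualBall 𝕜 E) :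
    ∑ i, ‖φ.1 (y i)‖ ^ 2 ≤ D := by
  set S := ∑ i, ‖φ.1 (y i)‖ ^ 2 with hS
  have S_nonneg : 0 ≤ S := by positivity
  let b (i : ι) : 𝕜 := star (φ.1 (y i))
  have φ_sum : φ.1 (∑ i, b i • y i) = (S : 𝕜) := by
    simp [b, hS, RCLike.conj_mul]
  have sq_le : S ^ 2 ≤ D * S := by
    calc S ^ 2 = ‖φ.1 (∑ i, b i • y i)‖ ^ 2 := by
          rw [φ_sum, RCLike.norm_of_nonneg S_nonneg]
      _ ≤ ‖∑ i, b i • y i‖ ^ 2 := by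
          gcongr
          exact φ.2 _
      _ ≤ D * ∑ i, ‖b i‖ ^ 2 := hy b
      _ = D * S := by simp only [b, norm_star, hS]
  obtain S_zero | S_pos := S_nonneg.eq_or_lt
  · rwa [← S_zero]
  · exact le_of_mul_le_mul_right (sq S ▸ sq_le) S_pos

theorem exists_eq_sqrt_smul_of_norm_sum_smul_sq_le {x : ι → E} {D : ℝ} (hD : 0 ≤ D)
    {l : ι → ℝ} (hl : ∀ i, 0 ≤ l i)
    (hx : ∀ a : ι → 𝕜, ‖∑ i, a i • x i‖ ^ 2 ≤ D * ∑ i, l i * ‖a i‖ ^ 2) :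
    ∃ y : ι → E, (∀ i, x i = ((√(l i) : ℝ) : 𝕜) • y i) ∧
      ∀ b : ι → 𝕜, ‖∑ i, b i • y i‖ ^ 2 ≤ D * ∑ i, ‖b i‖ ^ 2 := by
  classical
  let r (i : ι) : 𝕜 := (((√(l i))⁻¹ : ℝ) : 𝕜)
  refine ⟨fun i => r i • x i, fun i => ?_, fun b => ?_⟩
  · obtain l_zero | l_pos := (hl i).eq_or_lt
    · have weight_zero : ∑ j, l j * ‖(Pi.single i 1 : ι → 𝕜) j‖ ^ 2 = 0 := by
        rw [Finset.sum_eq_single i (fun j _ hj => by simp [hj]) (by simp), ← l_zero, zero_mul]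
      have sum_single : ∑ j, (Pi.single i 1 : ι → 𝕜) j • x j = x i := by simp [Pi.single_apply]
      have x_zero : x i = 0 := by
        simpa only [sum_single, weight_zero, mul_zero, sq_nonpos_iff, norm_eq_zero] using
          hx (Pi.single i 1)
      simp only [x_zero, smul_zero]
    · rw [smul_smul, ← RCLike.ofReal_mul, mul_inv_cancel₀ (Real.sqrt_pos.2 l_pos).ne',
        RCLike.ofReal_one, one_smul]
  · have weight_le (i : ι) : l i * ‖b i * r i‖ ^ 2 ≤ ‖b i‖ ^ 2 := by
      calc l i * ‖b i * r i‖ ^ 2 = (l i * (l i)⁻¹) * ‖b i‖ ^ 2 := by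
            rw [norm_mul, RCLike.norm_ofReal, mul_pow, sq_abs, inv_pow, Real.sq_sqrt (hl i)]
            ring
        _ ≤ ‖b i‖ ^ 2 := mul_le_of_le_one_left (by positivity) mul_inv_le_one
    calc ‖∑ i, b i • r i • x i‖ ^ 2 = ‖∑ i, (b i * r i) • x i‖ ^ 2 := by simp only [mul_smul]
      _ ≤ D * ∑ i, l i * ‖b i * r i‖ ^ 2 := hx _
      _ ≤ D * ∑ i, ‖b i‖ ^ 2 := by
          gcongr with i
          exact weight_le i

namespace CotypeTwoWith

variable {C : ℝ}

theorem exists_stdSimplex_norm_sum_smul_sq_le [Nonempty ι] (hE : CotypeTwoWith C E) (hC : 0 < C)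
    {x : ι → E} {B : ℝ} (hx : ∀ φ : DualBall 𝕜 E, ∑ i, ‖φ.1 (x i)‖ ≤ B) :
    ∃ l ∈ stdSimplex ℝ ι, ∀ a : ι → 𝕜,
      ‖∑ i, a i • x i‖ ^ 2 ≤ 48 * (C ^ 2 * B) ^ 2 * ∑ i, l i * ‖a i‖ ^ 2 := by
  have hB : 0 ≤ B := (Finset.sum_nonneg fun _ _ => norm_nonneg _).trans (hx (Classical.arbitrary _))
  let u : (ι → 𝕜) →L[𝕜] E := (Fintype.linearCombination 𝕜 x).mkContinuous B
    (norm_sum_smul_le_of_forall_dualBall hx)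
  have norm_u_le : ‖u‖ ≤ B := LinearMap.mkContinuous_norm_le _ hB _
  obtain ⟨l, hl, hul⟩ := (hE.summingWith_norm_sq_apply hC u).exists_stdSimplex_norm_sq_le
  refine ⟨l, hl, fun a => (hul a).trans ?_⟩
  have weighted_nonneg : 0 ≤ ∑ i, l i * ‖a i‖ ^ 2 :=
    Finset.sum_nonneg fun i _ => mul_nonneg (hl.1 i) (sq_nonneg _)
  calc 48 * C ^ 4 * ‖u‖ ^ 2 * ∑ i, l i * ‖a i‖ ^ 2
      ≤ 48 * C ^ 4 * B ^ 2 * ∑ i, l i * ‖a i‖ ^ 2 := by gcongr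
    _ = 48 * (C ^ 2 * B) ^ 2 * ∑ i, l i * ‖a i‖ ^ 2 := by ring

theorem summingWith_of_summingWith_sq (hE : CotypeTwoWith C E) (hC : 0 < C) {N : E → ℝ}
    (hN : ∀ t : ℝ, 0 ≤ t → ∀ x, N ((t : 𝕜) • x) = t * N x) {P : ℝ}
    (h : SummingWith (fun x => N x ^ 2) (fun x (φ : DualBall 𝕜 E) => ‖φ.1 x‖ ^ 2) P) :
    SummingWith N (fun x (φ : DualBall 𝕜 E) => ‖φ.1 x‖) (√(48 * P) * C ^ 2) := by
  intro m x B hB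
  have B_nonneg : 0 ≤ B :=
    (Finset.sum_nonneg fun _ _ => norm_nonneg _).trans (hB (Classical.arbitrary _))
  obtain _ | _ := isEmpty_or_nonempty (Fin m)
  · rw [Finset.univ_eq_empty, Finset.sum_empty]
    positivity
  obtain ⟨l, ⟨hl, hl_sum⟩, hxl⟩ := hE.exists_stdSimplex_norm_sum_smul_sq_le hC hB
  obtain ⟨y, hxy, hy⟩ := exists_eq_sqrt_smul_of_norm_sum_smul_sq_le (by positivity) hl hxl
  have sum_sq_le : ∑ i, N (y i) ^ 2 ≤ P * (48 * (C ^ 2 * B) ^ 2) :=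
    h m y _ (sum_norm_dualBall_apply_sq_le (by positivity) hy)
  calc ∑ i, N (x i) = ∑ i, √(l i) * N (y i) :=
        Finset.sum_congr rfl fun i _ => by rw [← hN _ (Real.sqrt_nonneg _), ← hxy]
    _ ≤ √(∑ i, √(l i) ^ 2) * √(∑ i, N (y i) ^ 2) := Real.sum_mul_le_sqrt_mul_sqrt _ _ _
    _ = √(∑ i, N (y i) ^ 2) := by simp only [Real.sq_sqrt (hl _), hl_sum, Real.sqrt_one, one_mul]
    _ ≤ √(48 * P * (C ^ 2 * B) ^ 2) := Real.sqrt_le_sqrt (by linarith)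
    _ = √(48 * P) * C ^ 2 * B := by
        rw [Real.sqrt_mul' _ (sq_nonneg _), Real.sqrt_sq (by positivity), mul_assoc]

theorem exists_isProbabilityMeasure_sqrt_integral_le [MeasurableSpace (DualBall 𝕜 E)]
    [BorelSpace (DualBall 𝕜 E)] (hE : CotypeTwoWith C E) (hC : 0 < C) {Ω : Type*}
    [MeasurableSpace Ω] (ρ : Measure Ω) [IsProbabilityMeasure ρ] (θ : Ω → DualBall 𝕜 E)
    (hθ : ∀ x, Integrable (fun ω => ‖(θ ω).1 x‖ ^ 2) ρ) :
    ∃ μ : Measure (DualBall 𝕜 E), IsProbabilityMeasure μ ∧ μ.Regular ∧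
      ∀ x, √(∫ ω, ‖(θ ω).1 x‖ ^ 2 ∂ρ) ≤ √48 * C ^ 2 * ∫ φ, ‖φ.1 x‖ ∂μ := by
  have sqrt_integral_smul (t : ℝ) (ht : 0 ≤ t) (x : E) :
      √(∫ ω, ‖(θ ω).1 ((t : 𝕜) • x)‖ ^ 2 ∂ρ) = t * √(∫ ω, ‖(θ ω).1 x‖ ^ 2 ∂ρ) := by
    simp only [map_smul, norm_smul, RCLike.norm_of_nonneg ht, mul_pow, integral_const_mul]
    rw [Real.sqrt_mul (sq_nonneg t), Real.sqrt_sq ht]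
  have two_summing : SummingWith (fun x => √(∫ ω, ‖(θ ω).1 x‖ ^ 2 ∂ρ) ^ 2)
      (fun x (φ : DualBall 𝕜 E) => ‖φ.1 x‖ ^ 2) 1 := by
    intro m x B hB
    calc ∑ j, √(∫ ω, ‖(θ ω).1 (x j)‖ ^ 2 ∂ρ) ^ 2 = ∫ ω, ∑ j, ‖(θ ω).1 (x j)‖ ^ 2 ∂ρ := by
          rw [integral_finsetSum _ fun j _ => hθ (x j)]
          exact Finset.sum_congr rfl fun j _ =>
            Real.sq_sqrt (integral_nonneg fun ω => by positivity)
      _ ≤ ∫ _, B ∂ρ := integral_mono (integrable_finsetSum _ fun j _ => hθ (x j))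
            (integrable_const B) fun ω => hB (θ ω)
      _ = 1 * B := by simp
  have one_summing := hE.summingWith_of_summingWith_sq hC sqrt_integral_smul two_summing
  rw [mul_one] at one_summing
  have norm_apply_smul (t : ℝ) (ht : 0 ≤ t) (x : E) (φ : DualBall 𝕜 E) :
      ‖φ.1 ((t : 𝕜) • x)‖ = t * ‖φ.1 x‖ := by
    rw [map_smul, norm_smul, RCLike.norm_of_nonneg ht]
  exact SummingWith.exists_isProbabilityMeasure_regular_le_integral (R := DualBall.normEval 𝕜)
    one_summing fun t ht x => ⟨(t : 𝕜) • x, sqrt_integral_smul t ht x, norm_apply_smul t ht x⟩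

end CotypeTwoWith

end DualBall

section SemiIntegral

variable {𝕜 F : Type*} [RCLike 𝕜] [NormedAddCommGroup F]

theorem SemiIntegralWith.exists_dominatedWith_of_cotype_two {E : Fin 2 → Type*}
    [∀ i, NormedAddCommGroup (E i)] [∀ i, NormedSpace 𝕜 (E i)] (hE : ∀ i, HasCotype 2 (E i))
    {A : ℝ} (hA : 0 ≤ A) {T : (∀ i, E i) → F} (hT : SemiIntegralWith 𝕜 1 A T) :
    ∃ B, 0 ≤ B ∧ DominatedWith 𝕜 1 B T := by
  let : MeasurableSpace (∀ i, DualBall 𝕜 (E i)) := borel _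
  have : BorelSpace (∀ i, DualBall 𝕜 (E i)) := ⟨rfl⟩
  let (i : Fin 2) : MeasurableSpace (DualBall 𝕜 (E i)) := borel _
  have (i : Fin 2) : BorelSpace (DualBall 𝕜 (E i)) := ⟨rfl⟩
  obtain ⟨ρ, _, -, hρ⟩ := hT
  choose C hC hCE using fun i => (hE i).exists_cotypeTwoWith
  have memLp (i : Fin 2) (x : E i) :
      MemLp (fun φ : ∀ i, DualBall 𝕜 (E i) => ‖(φ i).1 x‖) 2 ρ :=
    ((DualBall.normEval 𝕜 x).continuous.comp (continuous_apply i)).memLp_of_hasCompactSupport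
      (.of_compactSpace _)
  choose μ hμ_prob hμ_reg hμ using fun i =>
    (hCE i).exists_isProbabilityMeasure_sqrt_integral_le (hC i) ρ (fun φ => φ i)
      fun x => (memLp i x).integrable_sq
  refine ⟨A * ∏ i, √48 * C i ^ 2, by positivity, μ, hμ_prob, hμ_reg, fun x => ?_⟩
  have cauchy_schwarz : ∫ φ, ‖(φ 0).1 (x 0)‖ * ‖(φ 1).1 (x 1)‖ ∂ρ ≤
      √(∫ φ, ‖(φ 0).1 (x 0)‖ ^ 2 ∂ρ) * √(∫ φ, ‖(φ 1).1 (x 1)‖ ^ 2 ∂ρ) := by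
    simpa only [Real.rpow_two, ← Real.sqrt_eq_rpow] using
      integral_mul_le_Lp_mul_Lq_of_nonneg Real.HolderConjugate.two_two
        (.of_forall fun φ => norm_nonneg _) (.of_forall fun φ => norm_nonneg _)
        (by simpa using memLp 0 (x 0)) (by simpa using memLp 1 (x 1))
  have hρ_x : ‖T x‖ ≤ A * ∫ φ, ‖(φ 0).1 (x 0)‖ * ‖(φ 1).1 (x 1)‖ ∂ρ := by
    simpa only [Real.rpow_one, Fin.prod_univ_two, div_one] using hρ x
  calc ‖T x‖ ≤ A * ∫ φ, ‖(φ 0).1 (x 0)‖ * ‖(φ 1).1 (x 1)‖ ∂ρ := hρ_x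
    _ ≤ A * ∏ i, √(∫ φ, ‖(φ i).1 (x i)‖ ^ 2 ∂ρ) := by
        rw [Fin.prod_univ_two]
        gcongr
    _ ≤ A * ∏ i, √48 * C i ^ 2 * ∫ φ, ‖φ.1 (x i)‖ ∂μ i := by
        gcongr with i
        exact hμ i (x i)
    _ = _ := by simp only [Finset.prod_mul_distrib, Real.rpow_one, div_one, mul_assoc]

end SemiIntegral

section Product

variable {ι : Type*} {K : ι → Type*} [∀ i, TopologicalSpace (K i)] [∀ i, CompactSpace (K i)]
  [∀ i, T2Space (K i)] [∀ i, MeasurableSpace (K i)]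

theorem measurable_pi_of_continuous [∀ i, OpensMeasurableSpace (K i)] (f : C(∀ i, K i, ℝ)) :
    Measurable f := by
  let M : Subalgebra ℝ C(∀ i, K i, ℝ) :=
    { carrier := {g | Measurable g}
      mul_mem' := fun hg hh => Measurable.mul hg hh
      add_mem' := fun hg hh => Measurable.add hg hh
      algebraMap_mem' := fun c => measurable_const }
  have separates : M.SeparatesPoints := by
    intro k k' hkk'
    obtain ⟨i, hi⟩ := Function.ne_iff.1 hkk'
    obtain ⟨g, hg, hne⟩ := separatesPoints_continuous_of_t35Space hi
    exact ⟨_, ⟨⟨fun k => g (k i), hg.comp (continuous_apply i)⟩,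
      hg.measurable.comp (measurable_pi_apply i), rfl⟩, hne⟩
  have mem_closure : f ∈ closure (M : Set C(∀ i, K i, ℝ)) :=
    ContinuousMap.continuousMap_mem_subalgebra_closure_of_separatesPoints M separates f
  obtain ⟨g, hg, hgf⟩ := mem_closure_iff_seq_limit.1 mem_closure
  exact measurable_of_tendsto_metrizable hg <| tendsto_pi_nhds.2 fun k =>
    ((continuous_eval_const k).tendsto f).comp hgf

/- `Measure.pi ν` lives on the product `σ`-algebra, which can be smaller than the Borel one; the
functional it defines on `C(∀ i, K i, ℝ)` is represented by a regular Borel measure. -/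
theorem exists_isProbabilityMeasure_regular_integral_prod_eq [Fintype ι]
    [∀ i, OpensMeasurableSpace (K i)] (ν : ∀ i, Measure (K i)) [∀ i, IsProbabilityMeasure (ν i)] :
    letI : MeasurableSpace (∀ i, K i) := borel _
    ∃ μ : Measure (∀ i, K i), IsProbabilityMeasure μ ∧ μ.Regular ∧
      ∀ g : ∀ i, C(K i, ℝ), ∫ k, ∏ i, g i (k i) ∂μ = ∏ i, ∫ k, g i k ∂ν i := by
  have integrable (f : C(∀ i, K i, ℝ)) : Integrable f (Measure.pi ν) :=
    .of_bound (measurable_pi_of_continuous f).aestronglyMeasurable ‖f‖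
      (.of_forall f.norm_coe_le_norm)
  let Λ : C(∀ i, K i, ℝ) →ₗ[ℝ] ℝ :=
    { toFun := fun f => ∫ k, f k ∂Measure.pi ν
      map_add' := fun f g => integral_add (integrable f) (integrable g)
      map_smul' := fun c f => integral_const_mul c f }
  let : MeasurableSpace (∀ i, K i) := borel _
  have : BorelSpace (∀ i, K i) := ⟨rfl⟩
  obtain ⟨μ, hμ_prob, hμ_reg, hμ⟩ := exists_isProbabilityMeasure_regular_integral_eq Λ
    (fun f hf => integral_nonneg hf) (by simp [Λ])
  refine ⟨μ, hμ_prob, hμ_reg, fun g => ?_⟩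
  exact (hμ ⟨fun k => ∏ i, g i (k i), by fun_prop⟩).trans (integral_fintype_prod_eq_prod _)

theorem DominatedWith.semiIntegralWith {𝕜 F : Type*} [RCLike 𝕜] [Fintype ι] {E : ι → Type*}
    [∀ i, NormedAddCommGroup (E i)] [∀ i, NormedSpace 𝕜 (E i)] [NormedAddCommGroup F] {p A : ℝ}
    (hp : 0 ≤ p) {T : (∀ i, E i) → F} (hT : DominatedWith 𝕜 p A T) : SemiIntegralWith 𝕜 p A T := by
  let (i : ι) : MeasurableSpace (DualBall 𝕜 (E i)) := borel _
  have (i : ι) : BorelSpace (DualBall 𝕜 (E i)) := ⟨rfl⟩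
  obtain ⟨ν, _, -, hν⟩ := hT
  obtain ⟨μ, hμ_prob, hμ_reg, hμ⟩ := exists_isProbabilityMeasure_regular_integral_prod_eq ν
  refine ⟨μ, hμ_prob, hμ_reg, fun x => (hν x).trans_eq ?_⟩
  let g (i : ι) : C(DualBall 𝕜 (E i), ℝ) :=
    ⟨fun φ => ‖φ.1 (x i)‖ ^ p,
      (DualBall.normEval 𝕜 (x i)).continuous.rpow_const fun _ => .inr hp⟩
  have integral_nonneg (i : ι) : 0 ≤ ∫ φ, g i φ ∂ν i :=
    integral_nonneg fun φ => Real.rpow_nonneg (norm_nonneg _) p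
  calc A * ∏ i, (∫ φ, g i φ ∂ν i) ^ (1 / p) = A * (∏ i, ∫ φ, g i φ ∂ν i) ^ (1 / p) := by
        rw [Real.finsetProd_rpow _ _ fun i _ => integral_nonneg i]
    _ = _ := by rw [← hμ]; rfl

end Product

theorem semiIntegral_iff_dominated_of_cotype2_general {𝕜 : Type*} [RCLike 𝕜] {E : Fin 2 → Type*}
    [∀ i, NormedAddCommGroup (E i)] [∀ i, NormedSpace 𝕜 (E i)] (hE : ∀ i, HasCotype 2 (E i))
    {F : Type*} [NormedAddCommGroup F] (T : (∀ i, E i) → F) :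
    (∃ C, 0 ≤ C ∧ SemiIntegralWith 𝕜 1 C T) ↔ (∃ C, 0 ≤ C ∧ DominatedWith 𝕜 1 C T) :=
  ⟨fun ⟨_, hC, hT⟩ => hT.exists_dominatedWith_of_cotype_two hE hC,
    fun ⟨C, hC, hT⟩ => ⟨C, hC, hT.semiIntegralWith zero_le_one⟩⟩

/-- If `E` has cotype 2, then for every Banach space `F` a continuous
bilinear map `T : E × E → F` is `1`-semi-integral if and only if it is `1`-dominated. -/
theorem semiIntegral_iff_dominated_of_cotype2 {𝕜 : Type*} [RCLike 𝕜] {E : Type*}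
    [NormedAddCommGroup E] [NormedSpace 𝕜 E] [CompleteSpace E]
    (hE : HasCotype 2 E)
    {F : Type*} [NormedAddCommGroup F] [NormedSpace 𝕜 F] [CompleteSpace F]
    (T : ContinuousMultilinearMap 𝕜 (fun _ : Fin 2 => E) F) :
    (∃ C, 0 ≤ C ∧ SemiIntegralWith 𝕜 1 C ⇑T) ↔ (∃ C, 0 ≤ C ∧ DominatedWith 𝕜 1 C ⇑T) :=
  semiIntegral_iff_dominated_of_cotype2_general (fun _ => hE) T
end

section
/- Let E be a Banach space, n ≥ 2 and 0 < p < ∞. Every continuous n-linear map from E × ⋯ × E into E is strongly fully p-summing if and only if E is finite-dimensional. -/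
open MeasureTheory

/-!
A strongly fully `p`-summing map becomes an absolutely `p`-summing operator once all variables but
one are frozen. Applied to `z ↦ (∏_{i ≠ i₀} f_i (z_i)) • z_{i₀}`, this makes the identity of
`E i₀` absolutely `p`-summing, and the Dvoretzky–Rogers lemma excludes that in infinite dimension:
taking an ellipsoid of maximal volume in the unit ball of a `2k`-dimensional subspace, one finds
`k` vectors of norm at least `1/4` which are images of orthonormal vectors under a contraction, so
that their weak `ℓ₂`-norm is at most `1`. Conversely, a map with finite-dimensional range is a
finite combination of its coordinate forms, each of which is controlled by the supremum over the
unit ball of forms.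
-/

open Module Filter

section RpowSums

variable {ι : Type*} [Fintype ι] {p s : ℝ} {t : ι → ℝ}

theorem sum_rpow_le_rpow_of_sum_sq_le_sq (hp : 2 ≤ p) (ht : ∀ i, 0 ≤ t i) (hs : 0 ≤ s)
    (h : ∑ i, t i ^ 2 ≤ s ^ 2) : ∑ i, t i ^ p ≤ s ^ p := by
  have split {r : ℝ} (hr : 0 ≤ r) : r ^ p = r ^ (p - 2) * r ^ 2 := by
    rw [← Real.rpow_natCast, ← Real.rpow_add_of_nonneg hr (by linarith) (by positivity)]
    norm_num
  have t_le_s (i : ι) : t i ≤ s := by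
    refine (sq_le_sq₀ (ht i) hs).1 ?_
    exact (Finset.single_le_sum (fun i _ => sq_nonneg (t i)) (Finset.mem_univ i)).trans h
  calc ∑ i, t i ^ p = ∑ i, t i ^ (p - 2) * t i ^ 2 := by simp_rw [split (ht _)]
    _ ≤ ∑ i, s ^ (p - 2) * t i ^ 2 := by
      gcongr with i
      exacts [ht i, t_le_s i]
    _ ≤ s ^ (p - 2) * s ^ 2 := by
      rw [← Finset.mul_sum]
      gcongr
    _ = s ^ p := (split hs).symm

theorem sum_rpow_le_card_rpow_mul_of_sum_sq_le_sq (hp₀ : 0 < p) (hp : p ≤ 2)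
    (ht : ∀ i, 0 ≤ t i) (hs : 0 ≤ s) (h : ∑ i, t i ^ 2 ≤ s ^ 2) :
    ∑ i, t i ^ p ≤ (Fintype.card ι : ℝ) ^ (1 - p / 2) * s ^ p := by
  have sq_eq {r : ℝ} (hr : 0 ≤ r) : (r ^ p) ^ (2 / p) = r ^ 2 := by
    rw [← Real.rpow_mul hr, mul_div_cancel₀ _ hp₀.ne', Real.rpow_two]
  have power_mean : (∑ i, t i ^ p) ^ (2 / p) ≤
      (Fintype.card ι : ℝ) ^ (2 / p - 1) * ∑ i, t i ^ 2 := by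
    simpa only [sq_eq (ht _), Finset.card_univ] using
      Real.rpow_sum_le_const_mul_sum_rpow_of_nonneg Finset.univ ((one_le_div hp₀).2 hp)
        fun i _ => Real.rpow_nonneg (ht i) p
  have exponent : (1 - p / 2) * (2 / p) = 2 / p - 1 := by field_simp
  refine (Real.rpow_le_rpow_iff (Finset.sum_nonneg fun i _ => Real.rpow_nonneg (ht i) p)
    (by positivity) (by positivity : 0 < 2 / p)).1 ?_
  rw [Real.mul_rpow (by positivity) (by positivity), ← Real.rpow_mul (by positivity), exponent,
    sq_eq hs]
  exact power_mean.trans (by gcongr)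

theorem sum_rpow_le_card_rpow_min_mul_of_sum_sq_le_sq (hp : 0 < p)
    (ht : ∀ i, 0 ≤ t i) (hs : 0 ≤ s) (h : ∑ i, t i ^ 2 ≤ s ^ 2) :
    ∑ i, t i ^ p ≤ (Fintype.card ι : ℝ) ^ (1 - min p 2 / 2) * s ^ p := by
  rcases le_total p 2 with hp2 | hp2
  · rw [min_eq_left hp2]
    exact sum_rpow_le_card_rpow_mul_of_sum_sq_le_sq hp hp2 ht hs h
  · simpa [min_eq_right hp2] using sum_rpow_le_rpow_of_sum_sq_le_sq hp2 ht hs h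

theorem pi_norm_rpow_le_sum_norm_rpow {G : ι → Type*} [∀ i, SeminormedAddCommGroup (G i)]
    (hp : 0 < p) (v : ∀ i, G i) : ‖v‖ ^ p ≤ ∑ i, ‖v i‖ ^ p := by
  have sum_nonneg : 0 ≤ ∑ i, ‖v i‖ ^ p := by positivity
  rw [← Real.le_rpow_inv_iff_of_pos (norm_nonneg v) sum_nonneg hp]
  refine (pi_norm_le_iff_of_nonneg (by positivity)).2 fun i => ?_
  rw [Real.le_rpow_inv_iff_of_pos (norm_nonneg _) sum_nonneg hp]
  exact Finset.single_le_sum (f := fun i => ‖v i‖ ^ p) (fun i _ => by positivity)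
    (Finset.mem_univ i)

end RpowSums

section MaximalEllipsoid

variable {𝕜 : Type*} [RCLike 𝕜] {E : Type*} [NormedAddCommGroup E] [NormedSpace 𝕜 E]
  {H : Type*} [NormedAddCommGroup H] [InnerProductSpace 𝕜 H]

/-- The operator `u` maps the unit ball of the Hilbert space `H` onto an ellipsoid contained in the
unit ball of `E` and of maximal volume among the ellipsoids in the range of `u` with this property.
Such ellipsoids are the images of the unit ball under the contractions `u ∘ D`, and their volumes
are compared through the determinant of `D`. -/
structure IsVolumeMaximal (u : H →L[𝕜] E) : Prop where
  norm_le_one : ‖u‖ ≤ 1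
  norm_det_le_one (D : H →L[𝕜] H) : ‖u ∘L D‖ ≤ 1 → ‖D.det‖ ≤ 1

theorem isCompact_setOf_norm_comp_le_one [FiniteDimensional 𝕜 H] {L : H →L[𝕜] E}
    (hL : Function.Injective L) : IsCompact {A : H →L[𝕜] H | ‖L ∘L A‖ ≤ 1} := by
  have : ProperSpace (H →L[𝕜] H) := FiniteDimensional.proper 𝕜 _
  let compL := ContinuousLinearMap.compL 𝕜 H H E L
  have compL_injective : Function.Injective compL := fun A B h =>
    ContinuousLinearMap.ext fun x => hL (DFunLike.congr_fun h x)
  obtain ⟨K, -, hK⟩ := LinearMap.exists_antilipschitzWith compL.toLinearMap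
    (LinearMap.ker_eq_bot.2 compL_injective)
  have preimage_ball : {A : H →L[𝕜] H | ‖L ∘L A‖ ≤ 1} = compL ⁻¹' Metric.closedBall 0 1 := by
    ext A
    simp [compL]
  rw [preimage_ball]
  exact Metric.isCompact_of_isClosed_isBounded
    (Metric.isClosed_closedBall.preimage compL.continuous)
    (hK.isBounded_preimage Metric.isBounded_closedBall)

theorem exists_norm_comp_le_one_det_ne_zero (L : H →L[𝕜] E) :
    ∃ A : H →L[𝕜] H, ‖L ∘L A‖ ≤ 1 ∧ A.det ≠ 0 := by
  have pos : 0 < ‖L‖ + 1 := by positivity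
  refine ⟨(((‖L‖ + 1)⁻¹ : ℝ) : 𝕜) • ContinuousLinearMap.id 𝕜 H, ?_, ?_⟩
  · rw [ContinuousLinearMap.comp_smul, ContinuousLinearMap.comp_id, norm_smul,
      RCLike.norm_ofReal, abs_of_pos (by positivity), inv_mul_le_iff₀ pos]
    linarith
  · have scalar_ne_zero : (((‖L‖ + 1)⁻¹ : ℝ) : 𝕜) ≠ 0 := by exact_mod_cast inv_ne_zero pos.ne'
    rw [ContinuousLinearMap.det, ContinuousLinearMap.toLinearMap_smul, LinearMap.det_smul]
    simpa using pow_ne_zero (finrank 𝕜 H) scalar_ne_zero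

theorem exists_isVolumeMaximal_comp [FiniteDimensional 𝕜 H] {L : H →L[𝕜] E}
    (hL : Function.Injective L) : ∃ A : H →L[𝕜] H, IsVolumeMaximal (L ∘L A) := by
  obtain ⟨A₀, hA₀, det_A₀⟩ := exists_norm_comp_le_one_det_ne_zero L
  obtain ⟨A, hA, A_max⟩ := (isCompact_setOf_norm_comp_le_one hL).exists_isMaxOn ⟨A₀, hA₀⟩
    (f := fun A => ‖A.det‖) ContinuousLinearMap.continuous_det.norm.continuousOn
  have det_pos : 0 < ‖A.det‖ := (norm_pos_iff.2 det_A₀).trans_le (A_max hA₀)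
  refine ⟨A, hA, fun D hD => ?_⟩
  have det_comp : ‖(A ∘L D).det‖ = ‖A.det‖ * ‖D.det‖ := by
    simp [ContinuousLinearMap.det, LinearMap.det_comp]
  have comp_le : ‖(A ∘L D).det‖ ≤ ‖A.det‖ := A_max hD
  rw [det_comp] at comp_le
  exact (mul_le_iff_le_one_right det_pos).1 comp_le

theorem det_smul_starProjection_add_smul_starProjection_orthogonal [FiniteDimensional 𝕜 H]
    (W : Submodule 𝕜 H) (a b : 𝕜) :
    (a • W.starProjection + b • Wᗮ.starProjection).det = a ^ finrank 𝕜 W * b ^ finrank 𝕜 Wᗮ := by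
  let e := W.prodEquivOfIsCompl Wᗮ W.isCompl_orthogonal
  have conj : (a • W.starProjection + b • Wᗮ.starProjection : H →L[𝕜] H).toLinearMap =
      e.toLinearMap ∘ₗ ((a • LinearMap.id).prodMap (b • LinearMap.id)) ∘ₗ e.symm.toLinearMap := by
    rw [← LinearMap.comp_assoc, LinearEquiv.eq_comp_toLinearMap_symm]
    ext x
    · simp [e]
    · simp [e, (W.starProjection_apply_eq_zero_iff).2 x.2]
  rw [ContinuousLinearMap.det, conj, LinearMap.det_conj, LinearMap.det_prodMap]
  simp [LinearMap.det_smul]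

theorem norm_comp_smul_starProjection_add_le {u : H →L[𝕜] E} (hu : ‖u‖ ≤ 1)
    {W : Submodule 𝕜 H} [W.HasOrthogonalProjection]
    (hW : ∀ y ∈ Wᗮ, ‖u y‖ ≤ 1 / 4 * ‖y‖) :
    ‖u ∘L ((1 / 2 : 𝕜) • W.starProjection + (2 : 𝕜) • Wᗮ.starProjection)‖ ≤ 1 := by
  refine ContinuousLinearMap.opNorm_le_bound _ zero_le_one fun x => ?_
  calc ‖u ((1 / 2 : 𝕜) • W.starProjection x + (2 : 𝕜) • Wᗮ.starProjection x)‖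
    _ ≤ ‖(1 / 2 : 𝕜) • u (W.starProjection x)‖ + ‖(2 : 𝕜) • u (Wᗮ.starProjection x)‖ := by
      rw [map_add, map_smul, map_smul]
      exact norm_add_le _ _
    _ = 1 / 2 * ‖u (W.starProjection x)‖ + 2 * ‖u (Wᗮ.starProjection x)‖ := by
      simp [norm_smul]
    _ ≤ 1 / 2 * ‖x‖ + 2 * (1 / 4 * ‖x‖) := by
      gcongr
      · exact (u.le_of_opNorm_le hu _).trans (by simpa using W.norm_starProjection_apply_le x)
      · refine (hW _ (Wᗮ.starProjection_apply_mem x)).trans ?_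
        gcongr
        exact Wᗮ.norm_starProjection_apply_le x
    _ = 1 * ‖x‖ := by ring

theorem norm_map_le_mul_norm_of_forall_norm_eq_one {u : H →L[𝕜] E} {V : Submodule 𝕜 H} {c : ℝ}
    (h : ∀ x ∈ V, ‖x‖ = 1 → ‖u x‖ ≤ c) : ∀ y ∈ V, ‖u y‖ ≤ c * ‖y‖ := by
  intro y hy
  rcases eq_or_ne y 0 with rfl | hy0
  · simp
  have norm_pos : 0 < ‖y‖ := norm_pos_iff.2 hy0
  have := h ((‖y‖⁻¹ : 𝕜) • y) (V.smul_mem _ hy) (norm_smul_inv_norm hy0)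
  rwa [map_smul, norm_smul, norm_inv, RCLike.norm_ofReal, abs_norm, inv_mul_le_iff₀' norm_pos]
    at this

namespace IsVolumeMaximal

variable [FiniteDimensional 𝕜 H] {u : H →L[𝕜] E}

-- Otherwise shrinking the ellipsoid along `W` by `1/2` and stretching it along `Wᗮ` by `2` would
-- keep it in the unit ball while increasing its volume.
theorem exists_norm_eq_one_mem_orthogonal (hu : IsVolumeMaximal u) {W : Submodule 𝕜 H}
    (hW : finrank 𝕜 W < finrank 𝕜 Wᗮ) : ∃ x ∈ Wᗮ, ‖x‖ = 1 ∧ 1 / 4 ≤ ‖u x‖ := by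
  by_contra! small
  have small_on_orthogonal : ∀ y ∈ Wᗮ, ‖u y‖ ≤ 1 / 4 * ‖y‖ :=
    norm_map_le_mul_norm_of_forall_norm_eq_one fun x hx hx1 => (small x hx hx1).le
  have det_le := hu.norm_det_le_one _
    (norm_comp_smul_starProjection_add_le hu.norm_le_one small_on_orthogonal)
  rw [det_smul_starProjection_add_smul_starProjection_orthogonal, norm_mul, norm_pow, norm_pow,
    norm_div, norm_one, RCLike.norm_ofNat, one_div, inv_pow, inv_mul_le_iff₀ (by positivity),
    mul_one] at det_le
  exact det_le.not_gt (pow_lt_pow_right₀ one_lt_two hW)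

theorem exists_orthonormal_one_fourth_le_norm (hu : IsVolumeMaximal u) (k : ℕ)
    (hk : 2 * k ≤ finrank 𝕜 H) :
    ∃ v : Fin k → H, Orthonormal 𝕜 v ∧ ∀ i, 1 / 4 ≤ ‖u (v i)‖ := by
  induction k with
  | zero => exact ⟨Fin.elim0, ⟨fun i => i.elim0, fun i => i.elim0⟩, fun i => i.elim0⟩
  | succ k ih =>
    obtain ⟨v, v_orthonormal, hv⟩ := ih (by omega)
    let W := Submodule.span 𝕜 (Set.range v)
    have finrank_W : finrank 𝕜 W = k := by
      simpa using finrank_span_eq_card v_orthonormal.linearIndependent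
    have finrank_add := W.finrank_add_finrank_orthogonal
    obtain ⟨x, x_mem, norm_x, hx⟩ :=
      hu.exists_norm_eq_one_mem_orthogonal (W := W) (by omega)
    refine ⟨Matrix.vecCons x v, orthonormal_vecCons_iff.2 ⟨norm_x, fun i => ?_, v_orthonormal⟩,
      Fin.cases hx hv⟩
    exact Submodule.inner_left_of_mem_orthogonal
      (Submodule.subset_span (Set.mem_range_self i)) x_mem

end IsVolumeMaximal

end MaximalEllipsoid

section DvoretzkyRogers

variable {𝕜 : Type*} [RCLike 𝕜] {E F : Type*} [NormedAddCommGroup E] [NormedSpace 𝕜 E]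
  [NormedAddCommGroup F] [NormedSpace 𝕜 F]

theorem sum_sq_norm_apply_le_of_orthonormal {H : Type*} [NormedAddCommGroup H]
    [InnerProductSpace 𝕜 H] [CompleteSpace H] {ι : Type*} [Fintype ι] {v : ι → H}
    (hv : Orthonormal 𝕜 v) (χ : H →L[𝕜] 𝕜) : ∑ i, ‖χ (v i)‖ ^ 2 ≤ ‖χ‖ ^ 2 := by
  let w := (InnerProductSpace.toDual 𝕜 H).symm χ
  have apply_eq (z : H) : ‖χ z‖ = ‖inner 𝕜 z w‖ := by
    rw [norm_inner_symm, InnerProductSpace.toDual_symm_apply]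
  have norm_w : ‖w‖ = ‖χ‖ := LinearIsometryEquiv.norm_map _ χ
  simpa only [apply_eq, norm_w] using hv.sum_inner_products_le w (s := Finset.univ)

theorem exists_injective_of_not_finiteDimensional (hE : ¬ FiniteDimensional 𝕜 E) (d : ℕ) :
    ∃ L : EuclideanSpace 𝕜 (Fin d) →L[𝕜] E, Function.Injective L := by
  have rank_le : (d : Cardinal) ≤ Module.rank 𝕜 E :=
    Cardinal.natCast_lt_aleph0.le.trans
      (not_lt.1 fun h => hE (Module.rank_lt_aleph0_iff.1 h))
  obtain ⟨f, hf⟩ := Module.le_rank_iff_exists_linearMap.1 rank_le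
  let e := WithLp.linearEquiv 2 𝕜 (Fin d → 𝕜)
  exact ⟨LinearMap.toContinuousLinearMap (f ∘ₗ e.toLinearMap), hf.comp e.injective⟩

theorem exists_one_fourth_le_norm_sum_sq_norm_apply_le (hE : ¬ FiniteDimensional 𝕜 E) (k : ℕ) :
    ∃ y : Fin k → E, (∀ j, 1 / 4 ≤ ‖y j‖) ∧
      ∀ ψ : E →L[𝕜] 𝕜, ∑ j, ‖ψ (y j)‖ ^ 2 ≤ ‖ψ‖ ^ 2 := by
  obtain ⟨L, hL⟩ := exists_injective_of_not_finiteDimensional hE (2 * k)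
  obtain ⟨A, maximal⟩ := exists_isVolumeMaximal_comp hL
  obtain ⟨v, v_orthonormal, hv⟩ :=
    maximal.exists_orthonormal_one_fourth_le_norm k (by simp)
  refine ⟨fun j => (L ∘L A) (v j), hv, fun ψ => ?_⟩
  have norm_comp_le : ‖ψ ∘L (L ∘L A)‖ ≤ ‖ψ‖ :=
    (ψ.opNorm_comp_le _).trans (mul_le_of_le_one_right (norm_nonneg ψ) maximal.norm_le_one)
  calc ∑ j, ‖(ψ ∘L (L ∘L A)) (v j)‖ ^ 2 ≤ ‖ψ ∘L (L ∘L A)‖ ^ 2 :=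
        sum_sq_norm_apply_le_of_orthonormal v_orthonormal _
    _ ≤ ‖ψ‖ ^ 2 := by gcongr

/-- Absolutely `p`-summing operators. The bound `B` on the weak `p`-sums is quantified over instead
of being written as a supremum, and all functionals are tested instead of those of norm at most
one. -/
def AbsolutelySumming (p : ℝ) (u : E →L[𝕜] F) : Prop :=
  ∃ C : ℝ, ∀ (m : ℕ) (y : Fin m → E) (B : ℝ), 0 ≤ B →
    (∀ ψ : E →L[𝕜] 𝕜, ∑ j, ‖ψ (y j)‖ ^ p ≤ B * ‖ψ‖ ^ p) → ∑ j, ‖u (y j)‖ ^ p ≤ C * B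

theorem finiteDimensional_of_absolutelySumming_id {p : ℝ} (hp : 0 < p)
    (h : AbsolutelySumming p (ContinuousLinearMap.id 𝕜 E)) : FiniteDimensional 𝕜 E := by
  by_contra hE
  obtain ⟨C, hC⟩ := h
  let δ := min p 2 / 2
  have growth_le (k : ℕ) (hk : 0 < k) : (k : ℝ) ^ δ ≤ C * 4 ^ p := by
    obtain ⟨y, norm_y, weak_y⟩ := exists_one_fourth_le_norm_sum_sq_norm_apply_le hE k
    have sum_le : ∑ j, ‖y j‖ ^ p ≤ C * (k : ℝ) ^ (1 - δ) :=
      hC k y _ (by positivity) fun ψ => by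
        simpa only [Fintype.card_fin] using sum_rpow_le_card_rpow_min_mul_of_sum_sq_le_sq hp
          (fun j => norm_nonneg (ψ (y j))) (norm_nonneg ψ) (weak_y ψ)
    have le_sum : (k : ℝ) * (1 / 4) ^ p ≤ ∑ j, ‖y j‖ ^ p := by
      simpa using Finset.sum_le_sum fun j (_ : j ∈ Finset.univ) =>
        Real.rpow_le_rpow (by norm_num) (norm_y j) hp.le
    refine le_of_mul_le_mul_right ?_ (by positivity : 0 < (k : ℝ) ^ (1 - δ))
    calc (k : ℝ) ^ δ * (k : ℝ) ^ (1 - δ) = k * (1 / 4) ^ p * 4 ^ p := by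
          rw [← Real.rpow_add (by positivity), mul_assoc,
            ← Real.mul_rpow (by norm_num) (by norm_num)]
          norm_num
      _ ≤ C * (k : ℝ) ^ (1 - δ) * 4 ^ p := by
          exact mul_le_mul_of_nonneg_right (le_sum.trans sum_le) (by positivity)
      _ = C * 4 ^ p * (k : ℝ) ^ (1 - δ) := by ring
  have growth : Tendsto (fun k : ℕ => (k : ℝ) ^ δ) atTop atTop :=
    (tendsto_rpow_atTop (by positivity)).comp tendsto_natCast_atTop_atTop
  obtain ⟨k, lt_growth, hk⟩ :=
    ((growth.eventually_gt_atTop (C * 4 ^ p)).and (eventually_gt_atTop 0)).exists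
  exact (growth_le k hk).not_gt lt_growth

end DvoretzkyRogers

section MultilinearMaps

variable {𝕜 : Type*} [RCLike 𝕜] {ι : Type*} {E : ι → Type*} [∀ i, NormedAddCommGroup (E i)]
  [∀ i, NormedSpace 𝕜 (E i)]

theorem exists_continuousMultilinearMap_apply_eq_one [Finite ι] {a : ∀ i, E i}
    (ha : ∀ i, a i ≠ 0) : ∃ φ : ContinuousMultilinearMap 𝕜 E 𝕜, φ a = 1 := by
  cases nonempty_fintype ι
  choose f hf using fun i => SeparatingDual.exists_eq_one (R := 𝕜) (ha i)
  exact ⟨(ContinuousMultilinearMap.mkPiAlgebra 𝕜 ι 𝕜).compContinuousLinearMap f, by simp [hf]⟩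

variable [DecidableEq ι]

/-- The multilinear map `z ↦ φ (z with z_{i₀} replaced by e) • z_{i₀}`, whose slices in the
variable `i₀` are multiples of the identity of `E i₀`. -/
def smulCoord (φ : ContinuousMultilinearMap 𝕜 E 𝕜) (i₀ : ι) (e : E i₀) :
    ContinuousMultilinearMap 𝕜 E (E i₀) where
  toMultilinearMap := MultilinearMap.mk' (fun z => φ (Function.update z i₀ e) • z i₀)
    (fun z i x y => by
      rcases eq_or_ne i i₀ with rfl | hi
      · simp [smul_add]
      · simp [Function.update_comm hi, hi.symm, add_smul])
    (fun z i c x => by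
      rcases eq_or_ne i i₀ with rfl | hi
      · simp [smul_comm c]
      · simp [Function.update_comm hi, hi.symm, mul_smul])
  cont := by fun_prop

@[simp]
theorem smulCoord_apply (φ : ContinuousMultilinearMap 𝕜 E 𝕜) (i₀ : ι) (e : E i₀) (z : ∀ i, E i) :
    smulCoord φ i₀ e z = φ (Function.update z i₀ e) • z i₀ :=
  rfl

end MultilinearMaps

section FullySumming

variable {𝕜 : Type*} [RCLike 𝕜] {ι : Type*} [Fintype ι] [DecidableEq ι] {E : ι → Type*}
  [∀ i, NormedAddCommGroup (E i)] [∀ i, NormedSpace 𝕜 (E i)]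
  {F : Type*} [NormedAddCommGroup F] [NormedSpace 𝕜 F] {p : ℝ} {m : ℕ}

variable (𝕜) in
/-- The weak `p`-norm of the multi-indexed family `(x_{j_1}^{(1)}, …, x_{j_n}^{(n)})`, with
respect to the unit ball of continuous multilinear forms. -/
noncomputable def fullWeakNorm (p : ℝ) (x : ∀ i, Fin m → E i) : ℝ :=
  ⨆ φ : {φ : ContinuousMultilinearMap 𝕜 E 𝕜 // ‖φ‖ ≤ 1},
    (∑ j : ι → Fin m, ‖φ.1 (fun i => x i (j i))‖ ^ p) ^ (1 / p)

/-- Strongly fully `p`-summing multilinear maps, on a product of spaces indexed by an arbitrary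
finite type. -/
def StronglyFullySumming (p : ℝ) (T : ContinuousMultilinearMap 𝕜 E F) : Prop :=
  ∃ C, 0 ≤ C ∧ ∀ (m : ℕ) (x : ∀ i, Fin m → E i),
    (∑ j : ι → Fin m, ‖T (fun i => x i (j i))‖ ^ p) ^ (1 / p) ≤ C * fullWeakNorm 𝕜 p x

theorem fullWeakNorm_nonneg (x : ∀ i, Fin m → E i) : 0 ≤ fullWeakNorm 𝕜 p x :=
  Real.iSup_nonneg fun _ => by positivity

theorem bddAbove_range_fullWeakNorm (hp : 0 < p) (x : ∀ i, Fin m → E i) :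
    BddAbove (Set.range fun φ : {φ : ContinuousMultilinearMap 𝕜 E 𝕜 // ‖φ‖ ≤ 1} =>
      (∑ j : ι → Fin m, ‖φ.1 (fun i => x i (j i))‖ ^ p) ^ (1 / p)) := by
  refine ⟨(∑ j : ι → Fin m, (∏ i, ‖x i (j i)‖) ^ p) ^ (1 / p), ?_⟩
  rintro _ ⟨φ, rfl⟩
  dsimp only
  gcongr with j
  exact (φ.1.le_of_opNorm_le φ.2 _).trans_eq (one_mul _)

theorem sum_norm_rpow_le_fullWeakNorm_rpow (hp : 0 < p) (x : ∀ i, Fin m → E i)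
    {φ : ContinuousMultilinearMap 𝕜 E 𝕜} (hφ : ‖φ‖ ≤ 1) :
    ∑ j : ι → Fin m, ‖φ (fun i => x i (j i))‖ ^ p ≤ fullWeakNorm 𝕜 p x ^ p := by
  rw [← Real.rpow_inv_le_iff_of_pos (by positivity) (fullWeakNorm_nonneg x) hp, ← one_div]
  exact le_ciSup (bddAbove_range_fullWeakNorm hp x) ⟨φ, hφ⟩

theorem sum_norm_rpow_le_norm_mul_fullWeakNorm_rpow (hp : 0 < p) (x : ∀ i, Fin m → E i)
    (φ : ContinuousMultilinearMap 𝕜 E 𝕜) :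
    ∑ j : ι → Fin m, ‖φ (fun i => x i (j i))‖ ^ p ≤ ‖φ‖ ^ p * fullWeakNorm 𝕜 p x ^ p := by
  rcases eq_or_ne φ 0 with rfl | hφ
  · simp [Real.zero_rpow hp.ne']
  have norm_pos : 0 < ‖φ‖ := norm_pos_iff.2 hφ
  have := sum_norm_rpow_le_fullWeakNorm_rpow hp x (norm_smul_inv_norm (𝕜 := 𝕜) hφ).le
  simp only [smul_apply, norm_smul, norm_inv, RCLike.norm_ofReal,
    abs_norm, Real.mul_rpow (inv_nonneg.2 norm_pos.le) (norm_nonneg _),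
    Real.inv_rpow norm_pos.le] at this
  rwa [← Finset.mul_sum, inv_mul_le_iff₀ (by positivity)] at this

theorem fullWeakNorm_rpow_le (hp : 0 < p) {x : ∀ i, Fin m → E i} {B : ℝ}
    (h : ∀ φ : ContinuousMultilinearMap 𝕜 E 𝕜, ‖φ‖ ≤ 1 →
      ∑ j : ι → Fin m, ‖φ (fun i => x i (j i))‖ ^ p ≤ B) :
    fullWeakNorm 𝕜 p x ^ p ≤ B := by
  have hB : 0 ≤ B := le_trans (by positivity) (h 0 (by simp))
  have : Nonempty {φ : ContinuousMultilinearMap 𝕜 E 𝕜 // ‖φ‖ ≤ 1} := ⟨0, by simp⟩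
  rw [← Real.le_rpow_inv_iff_of_pos (fullWeakNorm_nonneg x) hB hp, ← one_div]
  refine ciSup_le fun φ => ?_
  gcongr
  exact h φ.1 φ.2

theorem stronglyFullySumming_iff_exists_sum_norm_rpow_le (hp : 0 < p)
    {T : ContinuousMultilinearMap 𝕜 E F} :
    StronglyFullySumming p T ↔ ∃ D, 0 ≤ D ∧ ∀ (m : ℕ) (x : ∀ i, Fin m → E i),
      ∑ j : ι → Fin m, ‖T (fun i => x i (j i))‖ ^ p ≤ D * fullWeakNorm 𝕜 p x ^ p := by
  have root_le_iff {C : ℝ} (hC : 0 ≤ C) {m : ℕ} (x : ∀ i, Fin m → E i) :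
      (∑ j : ι → Fin m, ‖T (fun i => x i (j i))‖ ^ p) ^ (1 / p) ≤ C * fullWeakNorm 𝕜 p x ↔
        ∑ j : ι → Fin m, ‖T (fun i => x i (j i))‖ ^ p ≤ C ^ p * fullWeakNorm 𝕜 p x ^ p := by
    have := fullWeakNorm_nonneg (𝕜 := 𝕜) (p := p) x
    rw [one_div, Real.rpow_inv_le_iff_of_pos (by positivity) (by positivity) hp,
      Real.mul_rpow hC this]
  constructor
  · rintro ⟨C, hC, h⟩
    exact ⟨C ^ p, by positivity, fun m x => (root_le_iff hC x).1 (h m x)⟩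
  · rintro ⟨D, hD, h⟩
    refine ⟨D ^ p⁻¹, by positivity, fun m x => (root_le_iff (by positivity) x).2 ?_⟩
    rw [Real.rpow_inv_rpow hD hp.ne']
    exact h m x

theorem exists_norm_rpow_le_mul_sum_norm_coord_rpow [FiniteDimensional 𝕜 F] (hp : 0 < p) :
    ∃ D, 0 ≤ D ∧ ∀ z : F, ‖z‖ ^ p ≤
      D * ∑ k, ‖(finBasis 𝕜 F).coord k z‖ ^ p := by
  let e := (finBasis 𝕜 F).equivFunL
  let K := ‖(e.symm : (Fin (finrank 𝕜 F) → 𝕜) →L[𝕜] F)‖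
  refine ⟨K ^ p, by positivity, fun z => ?_⟩
  have norm_le : ‖z‖ ≤ K * ‖e z‖ := by
    simpa using (e.symm : (Fin (finrank 𝕜 F) → 𝕜) →L[𝕜] F).le_opNorm (e z)
  calc ‖z‖ ^ p ≤ K ^ p * ‖e z‖ ^ p := by
        rw [← Real.mul_rpow (norm_nonneg _) (norm_nonneg _)]
        gcongr
    _ ≤ K ^ p * ∑ k, ‖e z k‖ ^ p := by
        gcongr
        exact pi_norm_rpow_le_sum_norm_rpow hp (e z)

theorem stronglyFullySumming_of_finiteDimensional [FiniteDimensional 𝕜 F] (hp : 0 < p)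
    (T : ContinuousMultilinearMap 𝕜 E F) : StronglyFullySumming p T := by
  obtain ⟨D, hD, norm_le⟩ := exists_norm_rpow_le_mul_sum_norm_coord_rpow (𝕜 := 𝕜) (F := F) hp
  let φ (k : Fin (finrank 𝕜 F)) : ContinuousMultilinearMap 𝕜 E 𝕜 :=
    (LinearMap.toContinuousLinearMap ((finBasis 𝕜 F).coord k)).compContinuousMultilinearMap T
  refine (stronglyFullySumming_iff_exists_sum_norm_rpow_le hp).2
    ⟨D * ∑ k, ‖φ k‖ ^ p, by positivity, fun m x => ?_⟩
  calc ∑ j : ι → Fin m, ‖T (fun i => x i (j i))‖ ^ p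
    _ ≤ ∑ j : ι → Fin m, D * ∑ k, ‖φ k (fun i => x i (j i))‖ ^ p := by
      gcongr with j
      exact norm_le _
    _ = D * ∑ k, ∑ j : ι → Fin m, ‖φ k (fun i => x i (j i))‖ ^ p := by
      rw [← Finset.mul_sum, Finset.sum_comm]
    _ ≤ D * ∑ k, ‖φ k‖ ^ p * fullWeakNorm 𝕜 p x ^ p := by
      gcongr with k
      exact sum_norm_rpow_le_norm_mul_fullWeakNorm_rpow hp x (φ k)
    _ = D * (∑ k, ‖φ k‖ ^ p) * fullWeakNorm 𝕜 p x ^ p := by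
      rw [← Finset.sum_mul, mul_assoc]

theorem norm_toContinuousLinearMap_le (φ : ContinuousMultilinearMap 𝕜 E F) (a : ∀ i, E i)
    (i₀ : ι) :
    ‖φ.toContinuousLinearMap a i₀‖ ≤ ‖φ‖ * ∏ i ∈ Finset.univ \ {i₀}, ‖a i‖ := by
  refine ContinuousLinearMap.opNorm_le_bound _ (by positivity) fun z => ?_
  have prod_update : ∏ i, ‖Function.update a i₀ z i‖ =
      ‖z‖ * ∏ i ∈ Finset.univ \ {i₀}, ‖a i‖ := by
    simp only [Function.apply_update (fun _ => norm) a,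
      Finset.prod_update_of_mem (Finset.mem_univ i₀)]
  calc ‖φ (Function.update a i₀ z)‖ ≤ ‖φ‖ * ∏ i, ‖Function.update a i₀ z i‖ := φ.le_opNorm _
    _ = ‖φ‖ * (∏ i ∈ Finset.univ \ {i₀}, ‖a i‖) * ‖z‖ := by rw [prod_update]; ring

theorem sum_norm_rpow_apply_update (S : ContinuousMultilinearMap 𝕜 E F) (a : ∀ i, E i) (i₀ : ι)
    (y : Fin m → E i₀) :
    ∑ j : ι → Fin m, ‖S (fun i => Function.update a i₀ (y (j i)) i)‖ ^ p =
      (m : ℝ) ^ (Fintype.card ι - 1) * ∑ j, ‖S.toContinuousLinearMap a i₀ (y j)‖ ^ p := by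
  have update_apply (j : ι → Fin m) :
      (fun i => Function.update a i₀ (y (j i)) i) = Function.update a i₀ (y (j i₀)) := by
    ext i
    rcases eq_or_ne i i₀ with rfl | hi
    · simp
    · simp [hi]
  simpa [update_apply] using Fintype.sum_piFinset_apply
    (fun j => ‖S.toContinuousLinearMap a i₀ (y j)‖ ^ p) Finset.univ i₀

-- Constant families `a i` in the places `i ≠ i₀` repeat each term `m ^ (card ι - 1)` times, on both
-- sides of the inequality.
theorem StronglyFullySumming.absolutelySumming_toContinuousLinearMap (hp : 0 < p)
    {T : ContinuousMultilinearMap 𝕜 E F} (hT : StronglyFullySumming p T) (a : ∀ i, E i) (i₀ : ι) :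
    AbsolutelySumming p (T.toContinuousLinearMap a i₀) := by
  obtain ⟨D, hD, hT⟩ := (stronglyFullySumming_iff_exists_sum_norm_rpow_le hp).1 hT
  let R := ∏ i ∈ Finset.univ \ {i₀}, ‖a i‖
  refine ⟨D * R ^ p, fun m y B hB weak_le => ?_⟩
  rcases m.eq_zero_or_pos with rfl | hm
  · simp only [Finset.univ_eq_empty, Finset.sum_empty]
    positivity
  let x : ∀ i, Fin m → E i := fun i j => Function.update a i₀ (y j) i
  let N : ℝ := (m : ℝ) ^ (Fintype.card ι - 1)
  have weak_x : fullWeakNorm 𝕜 p x ^ p ≤ N * (B * R ^ p) := by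
    refine fullWeakNorm_rpow_le hp fun φ hφ => ?_
    have norm_slice_le : ‖φ.toContinuousLinearMap a i₀‖ ≤ R :=
      (norm_toContinuousLinearMap_le φ a i₀).trans (mul_le_of_le_one_left (by positivity) hφ)
    rw [sum_norm_rpow_apply_update φ a i₀ y]
    gcongr
    exact (weak_le _).trans (by gcongr)
  refine le_of_mul_le_mul_left ?_ (by positivity : 0 < N)
  calc N * ∑ j, ‖T.toContinuousLinearMap a i₀ (y j)‖ ^ p
    _ = ∑ j : ι → Fin m, ‖T (fun i => x i (j i))‖ ^ p :=
      (sum_norm_rpow_apply_update T a i₀ y).symm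
    _ ≤ D * fullWeakNorm 𝕜 p x ^ p := hT m x
    _ ≤ D * (N * (B * R ^ p)) := by gcongr
    _ = N * (D * R ^ p * B) := by ring

theorem finiteDimensional_of_forall_stronglyFullySumming [∀ i, Nontrivial (E i)] (hp : 0 < p)
    (i₀ : ι) (h : ∀ T : ContinuousMultilinearMap 𝕜 E (E i₀), StronglyFullySumming p T) :
    FiniteDimensional 𝕜 (E i₀) := by
  choose a ha using fun i => exists_ne (0 : E i)
  obtain ⟨φ, hφ⟩ := exists_continuousMultilinearMap_apply_eq_one (𝕜 := 𝕜) ha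
  have slice_eq_id : (smulCoord φ i₀ (a i₀)).toContinuousLinearMap a i₀ =
      ContinuousLinearMap.id 𝕜 (E i₀) := by
    ext z
    simp [hφ]
  refine finiteDimensional_of_absolutelySumming_id hp ?_
  rw [← slice_eq_id]
  exact (h _).absolutelySumming_toContinuousLinearMap hp a i₀

theorem stronglyFullySumming_of_subsingleton (hp : 0 < p) (i : ι) [Subsingleton (E i)]
    (T : ContinuousMultilinearMap 𝕜 E F) : StronglyFullySumming p T := by
  have map_eq_zero (z : ∀ i, E i) : T z = 0 := T.map_coord_zero i (Subsingleton.elim _ _)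
  exact (stronglyFullySumming_iff_exists_sum_norm_rpow_le hp).2
    ⟨0, le_rfl, fun m x => by simp [map_eq_zero, Real.zero_rpow hp.ne']⟩

theorem stronglyFullySumming_iff_finiteDimensional_general (hp : 0 < p) (i₀ : ι) :
    (∀ T : ContinuousMultilinearMap 𝕜 E (E i₀), StronglyFullySumming p T) ↔
      FiniteDimensional 𝕜 (E i₀) ∨ ∃ i, Subsingleton (E i) := by
  constructor
  · intro h
    by_cases hE : ∃ i, Subsingleton (E i)
    · exact .inr hE
    · simp only [not_exists, not_subsingleton_iff_nontrivial] at hE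
      exact .inl (finiteDimensional_of_forall_stronglyFullySumming hp i₀ h)
  · rintro (_ | ⟨i, _⟩) T
    exacts [stronglyFullySumming_of_finiteDimensional hp T,
      stronglyFullySumming_of_subsingleton hp i T]

end FullySumming

/-- Every continuous `n`-linear map from `E × ⋯ × E` into `E` (`n ≥ 2`) is
strongly fully `p`-summing if and only if `E` is finite-dimensional. -/
theorem stronglyFullySumming_iff_finiteDimensional {𝕜 : Type*} [RCLike 𝕜] {E : Type*}
    [NormedAddCommGroup E] [NormedSpace 𝕜 E] [CompleteSpace E]
    {n : ℕ} (hn : 2 ≤ n) {p : ℝ} (hp : 0 < p) :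
    (∀ T : ContinuousMultilinearMap 𝕜 (fun _ : Fin n => E) E,
      ∃ C, 0 ≤ C ∧ ∀ (m : ℕ) (x : Fin n → Fin m → E),
        (∑ j : Fin n → Fin m, ‖T (fun i => x i (j i))‖ ^ p) ^ (1 / p) ≤
          C * ⨆ φ : {φ : ContinuousMultilinearMap 𝕜 (fun _ : Fin n => E) 𝕜 // ‖φ‖ ≤ 1},
            (∑ j : Fin n → Fin m, ‖φ.1 (fun i => x i (j i))‖ ^ p) ^ (1 / p)) ↔
    FiniteDimensional 𝕜 E :=
  (stronglyFullySumming_iff_finiteDimensional_general hp ⟨0, by omega⟩).trans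
    (or_iff_left_of_imp fun ⟨_, _⟩ => inferInstance)
end
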